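/- Let N ≥ 2 be an integer, 0 < R₁ < R₂, and let Q : [R₁,R₂] → ℝ be continuous satisfying (q1) and (q2). Let g satisfy (g1), be regularly oscillating at zero, and satisfy lim_{s→0⁺} g(s)/s = 0 and liminf_{s→+∞} g(s)/s > 0. Then there exists ν* > 0 such that for every ν > ν* there exists a C² function w : [R₁,R₂] → ℝ with w(r) > 0 for all r ∈ [R₁,R₂], w''(r) + ((N−1)/r) w'(r) + ν Q(r) g(w(r)) = 0 for all r ∈ [R₁,R₂], and w'(R₁) = w'(R₂) = 0; that is, the Neumann problem −Δu = ν Q(‖x‖) g(u) on the annulus {x ∈ ℝᴺ : R₁ < ‖x‖ < R₂} has at least one positive radially symmetric solution u(x) = w(‖x‖) for each ν > ν*. -/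

import Mathlib

open MeasureTheory Set Filter

/-- The Neumann problem for the radial equation
`w'' + ((N−1)/r) w' + Q(r) g(w) = 0` on `[R₁,R₂]` has a positive `C²` solution,
i.e. the Neumann problem `−Δu = Q(‖x‖) g(u)` on the annulus has a positive
radially symmetric solution `u(x) = w(‖x‖)`. -/
def RadialNeumannPosSol (N : ℕ) (R₁ R₂ : ℝ) (Q g : ℝ → ℝ) : Prop :=
  ∃ w w' w'' : ℝ → ℝ,
    (∀ r ∈ Icc R₁ R₂, HasDerivWithinAt w (w' r) (Icc R₁ R₂) r) ∧
    (∀ r ∈ Icc R₁ R₂, HasDerivWithinAt w' (w'' r) (Icc R₁ R₂) r) ∧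
    ContinuousOn w'' (Icc R₁ R₂) ∧
    (∀ r ∈ Icc R₁ R₂, 0 < w r) ∧
    (∀ r ∈ Icc R₁ R₂, w'' r + (((N : ℝ) - 1) / r) * w' r + Q r * g (w r) = 0) ∧
    w' R₁ = 0 ∧ w' R₂ = 0

/-- Condition (q1): there are `m ≥ 1` pairwise disjoint closed intervals in
`[R₁,R₂]` on which `Q ≥ 0` with `max Q > 0`, while `Q ≤ 0` outside them. -/
def CondQ1 (R₁ R₂ : ℝ) (Q : ℝ → ℝ) : Prop :=
  ∃ (m : ℕ) (σ τ : Fin m → ℝ), 0 < m ∧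
    (∀ i, R₁ ≤ σ i ∧ σ i ≤ τ i ∧ τ i ≤ R₂) ∧
    (Pairwise fun i j => Disjoint (Icc (σ i) (τ i)) (Icc (σ j) (τ j))) ∧
    (∀ i, ∀ r ∈ Icc (σ i) (τ i), 0 ≤ Q r) ∧
    (∀ i, ∃ r ∈ Icc (σ i) (τ i), 0 < Q r) ∧
    (∀ r ∈ Icc R₁ R₂ \ ⋃ i, Icc (σ i) (τ i), Q r ≤ 0)

/-- Condition (g1): `g : [0,∞) → [0,∞)` is continuous, `g 0 = 0`, `g > 0` on `(0,∞)`. -/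
def CondG1 (g : ℝ → ℝ) : Prop :=
  ContinuousOn g (Ici (0:ℝ)) ∧ (∀ s : ℝ, 0 ≤ s → 0 ≤ g s) ∧ g 0 = 0 ∧
    ∀ s : ℝ, 0 < s → 0 < g s

/-- `g` is regularly oscillating at zero. -/
def RegOscAtZero (g : ℝ → ℝ) : Prop :=
  ∀ ε : ℝ, 0 < ε → ∃ δ > (0:ℝ), ∃ η > (0:ℝ), ∀ s ω : ℝ,
    0 < s → s < δ → |ω - 1| < η → |g (ω * s) / g s - 1| < ε

/-- `liminf_{s → +∞} g(s)/s`, computed in `EReal`. -/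
noncomputable def GrowthLiminf (g : ℝ → ℝ) : EReal :=
  liminf (fun s : ℝ => ((g s / s : ℝ) : EReal)) atTop

/-- `limsup_{s → +∞} g(s)/s`, computed in `EReal`. -/
noncomputable def GrowthLimsup (g : ℝ → ℝ) : EReal :=
  limsup (fun s : ℝ => ((g s / s : ℝ) : EReal)) atTop

/-!
The radial equation is the first-order system `w' = β y`, `y' = -f G(w)` for `w` and its flux
`y = r ^ (N - 1) w'`, with `β = 1 / r ^ (N - 1)` and `f = ν r ^ (N - 1) Q`, and the Neumann
conditions say that the flux vanishes at both ends.

For large `ν` every nonnegative solution is bounded by a constant `K` on the intervals where `Q`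
may be positive. Indeed, with respect to `∫ β` the solution is concave there, so it satisfies a
Harnack inequality on compact subintervals, and the linear growth of `G` at infinity would make the
flux drop too much if the solution were large. Outside these intervals the flux is nondecreasing,
so a solution with `w(R₁) > K` and zero initial flux can never come back below `K`. On the other
hand a small initial value with zero initial flux gives a solution that, because `G(s) = o(s)`,
stays close to a constant in ratio, so by regular oscillation the final flux has the sign of
`-∫ f > 0`.

If `G` is Lipschitz, shooting from `R₁` with zero flux is continuous in the initial value, and the
largest initial value for which `w ≥ 0` and the final flux is `≥ 0` gives final flux zero: a
positive solution with positive final flux could be perturbed upwards. A continuous `G` is the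
locally uniform limit of its Pasch–Hausdorff envelopes, which satisfy the same estimates, and
Ascoli's theorem passes to the limit.
-/

open scoped NNReal Topology

section LipschitzEnvelope

variable {X : Type*} [PseudoMetricSpace X] {f h : X → ℝ} {L : ℝ≥0} {K : Set X}

/-- The Pasch–Hausdorff envelope of `f`, its largest `L`-Lipschitz minorant; it regularizes a
continuous nonlinearity into a Lipschitz one. It is meaningful when `f` is bounded below. -/
noncomputable def lipEnvelope (L : ℝ≥0) (f : X → ℝ) (x : X) : ℝ :=
  ⨅ y, (f y + L * dist x y)

theorem bddBelow_range_add_mul_dist (hf : BddBelow (range f)) (x : X) :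
    BddBelow (range fun y => f y + L * dist x y) := by
  obtain ⟨m, hm⟩ := hf
  refine ⟨m, forall_mem_range.2 fun y => ?_⟩
  have := hm (mem_range_self y)
  have : 0 ≤ L * dist x y := by positivity
  linarith

theorem lipEnvelope_le (hf : BddBelow (range f)) (x : X) : lipEnvelope L f x ≤ f x :=
  (ciInf_le (bddBelow_range_add_mul_dist hf x) x).trans_eq (by simp)

theorem le_lipEnvelope (hh : LipschitzWith L h) (hhf : h ≤ f) : h ≤ lipEnvelope L f := by
  intro x
  have : Nonempty X := ⟨x⟩
  exact le_ciInf fun y => (hh.le_add_mul x y).trans (by gcongr; exact hhf y)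

theorem lipschitzWith_lipEnvelope (hf : BddBelow (range f)) :
    LipschitzWith L (lipEnvelope L f) := by
  refine LipschitzWith.of_le_add_mul L fun x x' => ?_
  have : Nonempty X := ⟨x⟩
  rw [← sub_le_iff_le_add]
  refine le_ciInf fun y => sub_le_iff_le_add.2 ?_
  calc lipEnvelope L f x ≤ f y + L * dist x y :=
        ciInf_le (bddBelow_range_add_mul_dist hf x) y
    _ ≤ f y + L * (dist x x' + dist x' y) := by gcongr; exact dist_triangle x x' y
    _ = f y + L * dist x' y + L * dist x x' := by ring

theorem tendstoUniformlyOn_lipEnvelope (hf : BddBelow (range f)) (hfc : Continuous f)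
    (hK : IsCompact K) :
    TendstoUniformlyOn (fun n : ℕ => lipEnvelope n f) f atTop K := by
  refine Metric.tendstoUniformlyOn_iff.2 fun ε hε => ?_
  obtain ⟨m, hm⟩ := hf
  obtain ⟨C, hC⟩ := hK.bddAbove_image hfc.continuousOn
  obtain ⟨δ, hδ, hclose⟩ := Metric.mem_uniformity_dist.1
    (hK.uniformContinuousAt_of_continuousAt f (fun x _ => hfc.continuousAt)
      (Metric.dist_mem_uniformity (half_pos hε)))
  obtain ⟨n₀, hn₀⟩ := exists_nat_ge ((C - m) / δ)
  filter_upwards [eventually_ge_atTop n₀] with n hn x hx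
  have : Nonempty X := ⟨x⟩
  have hnδ : C - m ≤ n * δ := (div_le_iff₀ hδ).1 (hn₀.trans (by exact_mod_cast hn))
  have hge : f x - ε / 2 ≤ lipEnvelope n f x := by
    refine le_ciInf fun y => ?_
    have hmy : m ≤ f y := hm (mem_range_self y)
    rw [NNReal.coe_natCast]
    rcases lt_or_ge (dist x y) δ with hxy | hxy
    · have : dist (f x) (f y) < ε / 2 := hclose hxy hx
      have := (abs_lt.1 this).2
      have : 0 ≤ n * dist x y := by positivity
      linarith
    · have : (n : ℝ) * δ ≤ n * dist x y := by gcongr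
      have := hC (mem_image_of_mem f hx)
      linarith
  have hle := lipEnvelope_le (L := n) ⟨m, hm⟩ x
  rw [Real.dist_eq, abs_lt]
  constructor <;> linarith

theorem exists_seq_lipschitzWith_le (hf : BddBelow (range f)) (hfc : Continuous f) (L : ℝ≥0)
    {ε : ℝ} (hε : 0 < ε) (hK : IsCompact K) :
    ∃ F : ℕ → X → ℝ, (∀ n, ∃ C, LipschitzWith C (F n)) ∧ (∀ n, F n ≤ f) ∧
      (∀ n h, LipschitzWith L h → h ≤ f → h ≤ F n) ∧
        (∀ S, IsCompact S → TendstoUniformlyOn F f atTop S) ∧ ∀ n, ∀ x ∈ K, |F n x - f x| ≤ ε := by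
  obtain ⟨n₀, hn₀⟩ := eventually_atTop.1 ((Metric.tendstoUniformlyOn_iff.1
    (tendstoUniformlyOn_lipEnvelope hf hfc hK) ε hε).and (eventually_ge_atTop ⌈L⌉₊))
  refine ⟨fun n => lipEnvelope (n + n₀ : ℕ) f, fun n => ⟨_, lipschitzWith_lipEnvelope hf⟩,
    fun n x => lipEnvelope_le hf x, fun n h hh hhf => le_lipEnvelope (hh.weaken ?_) hhf,
    fun S hS u hu => (tendsto_add_atTop_nat n₀).eventually
      (tendstoUniformlyOn_lipEnvelope hf hfc hS u hu), fun n x hx => ?_⟩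
  · exact Nat.ceil_le.1 (hn₀ _ (Nat.le_add_left _ _)).2
  · rw [← Real.dist_eq, dist_comm]
    exact ((hn₀ _ (Nat.le_add_left _ _)).1 x hx).le

end LipschitzEnvelope

section CompactnessOfLipschitzSequences

open scoped BoundedContinuousFunction

theorem exists_subseq_tendsto_of_lipschitzOnWith {X Y : Type*} [PseudoMetricSpace X]
    [MetricSpace Y] {s : Set X} {S : Set Y} {C : ℝ≥0} {F : ℕ → X → Y} (hs : IsCompact s)
    (hS : IsCompact S) (hF : ∀ n, LipschitzOnWith C (F n) s) (hFS : ∀ n, MapsTo (F n) s S) :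
    ∃ φ : ℕ → ℕ, StrictMono φ ∧ ∃ f : X → Y, ContinuousOn f s ∧
      ∀ x ∈ s, Tendsto (fun n => F (φ n) x) atTop (𝓝 (f x)) := by
  have : CompactSpace s := isCompact_iff_compactSpace.1 hs
  let H : ℕ → (s →ᵇ Y) := fun n =>
    BoundedContinuousFunction.mkOfCompact ⟨s.domRestrict (F n), (hF n).continuousOn.domRestrict⟩
  have hcompact : IsCompact (closure (range H)) := by
    refine BoundedContinuousFunction.arzela_ascoli S hS _ ?_ ?_
    · rintro _ x ⟨n, rfl⟩
      exact hFS n x.2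
    · refine Metric.equicontinuous_of_continuity_modulus (fun d => C * d) ?_ _ ?_
      · simpa using (continuous_const_mul (C : ℝ)).tendsto 0
      · rintro x y ⟨_, n, rfl⟩
        exact (hF n).dist_le_mul x x.2 y y.2
  obtain ⟨h, -, φ, hφ, hlim⟩ := hcompact.tendsto_subseq fun n => subset_closure (mem_range_self n)
  classical
  refine ⟨φ, hφ, fun x => if hx : x ∈ s then h ⟨x, hx⟩ else F 0 x, ?_, fun x hx => ?_⟩
  · refine continuousOn_iff_continuous_domRestrict.2 (h.continuous.congr fun x => ?_)
    simp
  · simp only [dif_pos hx]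
    exact (BoundedContinuousFunction.tendsto_iff_tendstoUniformly.1 hlim).tendsto_at ⟨x, hx⟩

end CompactnessOfLipschitzSequences

section IntegralCurves

variable {E : Type*} [NormedAddCommGroup E] [NormedSpace ℝ E] {a b c t : ℝ} {K : ℝ≥0}
  {v : ℝ → E → E} {γ γ₁ γ₂ : ℝ → E}

theorem isIntegralCurveOn_Icc_piecewise (hab : a ≤ b) (hbc : b ≤ c)
    (h₁ : IsIntegralCurveOn γ₁ v (Icc a b)) (h₂ : IsIntegralCurveOn γ₂ v (Icc b c))
    (hb : γ₁ b = γ₂ b) : IsIntegralCurveOn ((Iic b).piecewise γ₁ γ₂) v (Icc a c) := by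
  set γ := (Iic b).piecewise γ₁ γ₂
  have hγ₁ : EqOn γ γ₁ (Icc a b) := fun t ht => piecewise_eq_of_mem _ _ _ ht.2
  have hγ₂ : EqOn γ γ₂ (Icc b c) := fun t ht => by
    rcases ht.1.eq_or_lt with rfl | hbt
    · exact (piecewise_eq_of_mem _ _ _ (mem_Iic.2 le_rfl)).trans hb
    · exact piecewise_eq_of_notMem _ _ _ (notMem_Iic.2 hbt)
  have hleft (t : ℝ) : HasDerivWithinAt γ (v t (γ t)) (Icc a b) t := by
    by_cases ht : t ∈ Icc a b
    · exact ((h₁ t ht).congr hγ₁ (hγ₁ ht)).congr_deriv (by rw [hγ₁ ht])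
    · exact HasFDerivWithinAt.of_notMem_closure (by rwa [isClosed_Icc.closure_eq])
  have hright (t : ℝ) : HasDerivWithinAt γ (v t (γ t)) (Icc b c) t := by
    by_cases ht : t ∈ Icc b c
    · exact ((h₂ t ht).congr hγ₂ (hγ₂ ht)).congr_deriv (by rw [hγ₂ ht])
    · exact HasFDerivWithinAt.of_notMem_closure (by rwa [isClosed_Icc.closure_eq])
  intro t _
  rw [← Icc_union_Icc_eq_Icc hab hbc]
  exact (hleft t).union (hright t)

theorem exists_isIntegralCurveOn_Icc_of_mul_le_half [CompleteSpace E] (hab : a ≤ b)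
    (hv : ∀ t ∈ Icc a b, LipschitzWith K (v t)) (hvc : ∀ x, ContinuousOn (v · x) (Icc a b))
    (hK : K * (b - a) ≤ 1 / 2) (x₀ : E) :
    ∃ γ : ℝ → E, γ a = x₀ ∧ IsIntegralCurveOn γ v (Icc a b) := by
  obtain ⟨M, hM⟩ := isCompact_Icc.exists_bound_of_continuousOn (hvc x₀)
  have hM0 : 0 ≤ M := (norm_nonneg _).trans (hM a ⟨le_rfl, hab⟩)
  have hba : 0 ≤ b - a := sub_nonneg.2 hab
  let R : ℝ≥0 := ⟨2 * M * (b - a), by positivity⟩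
  have hPL : IsPicardLindelof v (⟨a, le_rfl, hab⟩ : Icc a b) x₀ R 0 (⟨M, hM0⟩ + K * R) K := by
    refine ⟨fun t ht => (hv t ht).lipschitzOnWith, fun x _ => hvc x, fun t ht x hx => ?_, ?_⟩
    · calc ‖v t x‖ ≤ ‖v t x₀‖ + ‖v t x - v t x₀‖ := norm_le_norm_add_norm_sub' _ _
        _ ≤ M + K * ‖x - x₀‖ := add_le_add (hM t ht) ((hv t ht).norm_sub_le x x₀)
        _ ≤ M + K * R := by gcongr; exact mem_closedBall_iff_norm.1 hx
    · rw [sub_self, max_eq_left hba, NNReal.coe_zero, sub_zero]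
      change (M + K * (2 * M * (b - a))) * (b - a) ≤ 2 * M * (b - a)
      nlinarith [mul_le_mul_of_nonneg_left hK (mul_nonneg hM0 hba)]
  exact hPL.exists_eq_forall_mem_Icc_hasDerivWithinAt₀

theorem exists_isIntegralCurveOn_Icc_of_lipschitzWith [CompleteSpace E] (hab : a ≤ b)
    (hv : ∀ t ∈ Icc a b, LipschitzWith K (v t)) (hvc : ∀ x, ContinuousOn (v · x) (Icc a b))
    (x₀ : E) : ∃ γ : ℝ → E, γ a = x₀ ∧ IsIntegralCurveOn γ v (Icc a b) := by
  obtain ⟨n, hn⟩ : ∃ n : ℕ, K * (b - a) ≤ 2 ^ n * (1 / 2) := by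
    obtain ⟨n, hn⟩ := pow_unbounded_of_one_lt (2 * (K * (b - a))) one_lt_two
    exact ⟨n, by linarith⟩
  induction n generalizing a b x₀ with
  | zero => exact exists_isIntegralCurveOn_Icc_of_mul_le_half hab hv hvc (by simpa using hn) x₀
  | succ n ih =>
    have ham : a ≤ (a + b) / 2 := by linarith
    have hmb : (a + b) / 2 ≤ b := by linarith
    have hleft : Icc a ((a + b) / 2) ⊆ Icc a b := Icc_subset_Icc_right hmb
    have hright : Icc ((a + b) / 2) b ⊆ Icc a b := Icc_subset_Icc_left ham
    rw [pow_succ] at hn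
    obtain ⟨γ₁, hγ₁, hγ₁v⟩ := ih ham (fun t ht => hv t (hleft ht)) (fun x => (hvc x).mono hleft)
      x₀ (by linarith)
    obtain ⟨γ₂, hγ₂, hγ₂v⟩ := ih hmb (fun t ht => hv t (hright ht))
      (fun x => (hvc x).mono hright) (γ₁ ((a + b) / 2))
      (by linarith)
    exact ⟨(Iic ((a + b) / 2)).piecewise γ₁ γ₂,
      (piecewise_eq_of_mem _ _ _ (mem_Iic.2 ham)).trans hγ₁,
      isIntegralCurveOn_Icc_piecewise ham hmb hγ₁v hγ₂v hγ₂.symm⟩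

theorem dist_le_of_isIntegralCurveOn_Icc (hv : ∀ t ∈ Icc a b, LipschitzWith K (v t))
    (h₁ : IsIntegralCurveOn γ₁ v (Icc a b)) (h₂ : IsIntegralCurveOn γ₂ v (Icc a b))
    (ht : t ∈ Icc a b) : dist (γ₁ t) (γ₂ t) ≤ dist (γ₁ a) (γ₂ a) * Real.exp (K * (t - a)) :=
  dist_le_of_trajectories_ODE_of_mem (s := fun _ => univ)
    (fun t ht => (hv t (Ico_subset_Icc_self ht)).lipschitzOnWith) h₁.continuousOn
    (fun t ht => (h₁ t (Ico_subset_Icc_self ht)).mono_of_mem_nhdsWithin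
      (Icc_mem_nhdsGE_of_mem ht)) (fun _ _ => mem_univ _) h₂.continuousOn
    (fun t ht => (h₂ t (Ico_subset_Icc_self ht)).mono_of_mem_nhdsWithin
      (Icc_mem_nhdsGE_of_mem ht)) (fun _ _ => mem_univ _) le_rfl t ht

theorem isIntegralCurveOn_Icc_of_tendsto [CompleteSpace E] {γs : ℕ → ℝ → E}
    {vs : ℕ → ℝ → E → E} {C : ℝ} (hγs : ∀ n, IsIntegralCurveOn (γs n) (vs n) (Icc a b))
    (hcont : ∀ n, ContinuousOn (fun t => vs n t (γs n t)) (Icc a b))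
    (hbound : ∀ n, ∀ t ∈ Icc a b, ‖vs n t (γs n t)‖ ≤ C)
    (hγ : ∀ t ∈ Icc a b, Tendsto (fun n => γs n t) atTop (𝓝 (γ t)))
    (hv : ∀ t ∈ Icc a b, Tendsto (fun n => vs n t (γs n t)) atTop (𝓝 (v t (γ t))))
    (hvc : ContinuousOn (fun t => v t (γ t)) (Icc a b)) :
    IsIntegralCurveOn γ v (Icc a b) := by
  have hintegral : ∀ t ∈ Icc a b, γ t = γ a + ∫ s in a..t, v s (γ s) := by
    intro t ht
    have hsub : uIcc a t ⊆ Icc a b := by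
      rw [uIcc_of_le ht.1]; exact Icc_subset_Icc_right ht.2
    have hsub' : uIoc a t ⊆ Icc a b := uIoc_subset_uIcc.trans hsub
    have hn (n : ℕ) : γs n t = γs n a + ∫ s in a..t, vs n s (γs n s) := by
      rw [intervalIntegral.integral_eq_sub_of_hasDerivAt_of_le ht.1
        ((hγs n).continuousOn.mono (Icc_subset_Icc_right ht.2)) (fun s hs => ?_)
        ((hcont n).mono hsub).intervalIntegrable, add_sub_cancel]
      have hsb : s < b := hs.2.trans_le ht.2
      exact (hγs n s ⟨hs.1.le, hsb.le⟩).hasDerivAt (Icc_mem_nhds hs.1 hsb)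
    refine tendsto_nhds_unique (hγ t ht) ?_
    simp_rw [hn]
    refine (hγ a ⟨le_rfl, ht.1.trans ht.2⟩).add ?_
    refine intervalIntegral.tendsto_integral_filter_of_dominated_convergence (fun _ => C)
      (Eventually.of_forall fun n => ?_) (Eventually.of_forall fun n => ?_)
      intervalIntegrable_const (ae_of_all _ fun s hs => hv s (hsub' hs))
    · exact ((hcont n).mono hsub').aestronglyMeasurable measurableSet_uIoc
    · exact ae_of_all _ fun s hs => hbound n s (hsub' hs)
  intro t ht
  have : Fact (t ∈ Icc a b) := ⟨ht⟩
  refine HasDerivWithinAt.congr (HasDerivWithinAt.const_add _ ?_) hintegral (hintegral t ht)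
  refine intervalIntegral.integral_hasDerivWithinAt_right ?_
    (hvc.stronglyMeasurableAtFilter_nhdsWithin measurableSet_Icc t) (hvc t ht)
  refine (hvc.mono ?_).intervalIntegrable
  rw [uIcc_of_le ht.1]; exact Icc_subset_Icc_right ht.2

end IntegralCurves

theorem mul_sub_nonneg_of_isMinOn {s : Set ℝ} {u : ℝ → ℝ} {u' x z : ℝ} (hs : Convex ℝ s)
    (hmin : IsMinOn u s x) (hu : HasDerivWithinAt u u' s x) (hx : x ∈ s) (hz : z ∈ s) :
    0 ≤ (z - x) * u' := by
  simpa using hmin.localize.hasFDerivWithinAt_nonneg hu.hasFDerivWithinAt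
    (sub_mem_posTangentConeAt_of_segment_subset (hs.segment_subset hx hz))

section FluxSystem

variable {β f G w y : ℝ → ℝ} {a b c d C K : ℝ}

/-- The first-order vector field of the equation `(w' / β)' + f G(w) = 0`, in the unknowns `w` and
the flux `y = w' / β`. For a radial equation in dimension `N`, `β = 1 / r ^ (N - 1)`. -/
def fluxField (β f G : ℝ → ℝ) (r : ℝ) (z : ℝ × ℝ) : ℝ × ℝ :=
  (β r * z.2, -(f r * G z.1))

/-- `w` solves `(w' / β)' + f G(w) = 0` on `[a, b]` with flux `y = w' / β`, written as a first-order
system so that neither a second derivative nor a differentiability of `β` is needed. -/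
structure IsFluxSolution (β f G : ℝ → ℝ) (a b : ℝ) (w y : ℝ → ℝ) : Prop where
  hasDerivWithinAt : ∀ r ∈ Icc a b, HasDerivWithinAt w (β r * y r) (Icc a b) r
  hasDerivWithinAt_flux : ∀ r ∈ Icc a b, HasDerivWithinAt y (-(f r * G (w r))) (Icc a b) r

theorem isFluxSolution_iff_isIntegralCurveOn : IsFluxSolution β f G a b w y ↔
    IsIntegralCurveOn (fun r => (w r, y r)) (fluxField β f G) (Icc a b) :=
  ⟨fun h r hr => (h.hasDerivWithinAt r hr).prodMk (h.hasDerivWithinAt_flux r hr), fun h =>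
    ⟨fun r hr => by simpa [fluxField] using (h r hr).hasFDerivWithinAt.fst.hasDerivWithinAt,
      fun r hr => by simpa [fluxField] using (h r hr).hasFDerivWithinAt.snd.hasDerivWithinAt⟩⟩

namespace IsFluxSolution

theorem continuousOn (h : IsFluxSolution β f G a b w y) : ContinuousOn w (Icc a b) :=
  fun r hr => (h.hasDerivWithinAt r hr).continuousWithinAt

theorem continuousOn_flux (h : IsFluxSolution β f G a b w y) : ContinuousOn y (Icc a b) :=
  fun r hr => (h.hasDerivWithinAt_flux r hr).continuousWithinAt

theorem mono (h : IsFluxSolution β f G a b w y) (hac : a ≤ c) (hdb : d ≤ b) :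
    IsFluxSolution β f G c d w y where
  hasDerivWithinAt r hr := (h.hasDerivWithinAt r (Icc_subset_Icc hac hdb hr)).mono
    (Icc_subset_Icc hac hdb)
  hasDerivWithinAt_flux r hr := (h.hasDerivWithinAt_flux r (Icc_subset_Icc hac hdb hr)).mono
    (Icc_subset_Icc hac hdb)

theorem comp_neg (h : IsFluxSolution β f G a b w y) :
    IsFluxSolution (fun r => β (-r)) (fun r => f (-r)) G (-b) (-a) (fun r => w (-r))
      (fun r => -y (-r)) := by
  have hmaps : MapsTo Neg.neg (Icc (-b) (-a)) (Icc a b) := fun _ => neg_mem_Icc_iff.2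
  have hneg (r : ℝ) : HasDerivWithinAt Neg.neg (-1) (Icc (-b) (-a)) r :=
    (hasDerivAt_neg r).hasDerivWithinAt
  refine ⟨fun r hr => ?_, fun r hr => ?_⟩
  · exact ((h.hasDerivWithinAt _ (hmaps hr)).scomp r (hneg r) hmaps).congr_deriv (by simp)
  · exact ((h.hasDerivWithinAt_flux _ (hmaps hr)).scomp r (hneg r) hmaps).neg.congr_deriv
      (by simp)

theorem monotoneOn (h : IsFluxSolution β f G a b w y) (hy : ∀ r ∈ Ioo a b, 0 ≤ β r * y r) :
    MonotoneOn w (Icc a b) :=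
  monotoneOn_of_hasDerivWithinAt_nonneg (convex_Icc a b) h.continuousOn
    (fun r hr => (h.hasDerivWithinAt r (interior_subset hr)).mono interior_subset)
    (by rwa [interior_Icc])

theorem monotoneOn_flux (h : IsFluxSolution β f G a b w y)
    (hfG : ∀ r ∈ Ioo a b, f r * G (w r) ≤ 0) : MonotoneOn y (Icc a b) :=
  monotoneOn_of_hasDerivWithinAt_nonneg (convex_Icc a b) h.continuousOn_flux
    (fun r hr => (h.hasDerivWithinAt_flux r (interior_subset hr)).mono interior_subset)
    (by simpa only [interior_Icc, neg_nonneg] using hfG)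

theorem antitoneOn_flux (h : IsFluxSolution β f G a b w y)
    (hfG : ∀ r ∈ Ioo a b, 0 ≤ f r * G (w r)) : AntitoneOn y (Icc a b) :=
  antitoneOn_of_hasDerivWithinAt_nonpos (convex_Icc a b) h.continuousOn_flux
    (fun r hr => (h.hasDerivWithinAt_flux r (interior_subset hr)).mono interior_subset)
    (by simpa only [interior_Icc, neg_nonpos] using hfG)

theorem eq_zero_of_left_eq_zero (h : IsFluxSolution β f G a b w y)
    (hβ : ContinuousOn β (Icc a b)) (hf : ContinuousOn f (Icc a b))
    (hG : ∀ r ∈ Icc a b, |G (w r)| ≤ C * |w r|) (hw : w a = 0) (hy : y a = 0) :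
    ∀ r ∈ Icc a b, w r = 0 := by
  obtain ⟨B, hB⟩ := isCompact_Icc.exists_bound_of_continuousOn hβ
  obtain ⟨A, hA⟩ := isCompact_Icc.exists_bound_of_continuousOn hf
  have hcurve := isFluxSolution_iff_isIntegralCurveOn.1 h
  have hzero := eq_zero_of_abs_deriv_le_mul_abs_self_of_eq_zero_right (K := max B (A * C))
    hcurve.continuousOn
    (fun r hr => (hcurve r (Ico_subset_Icc_self hr)).mono_of_mem_nhdsWithin
      (Icc_mem_nhdsGE_of_mem hr)) (Prod.ext hw hy) fun r hr => ?_
  · exact fun r hr => congrArg Prod.fst (hzero r hr)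
  have hr' := Ico_subset_Icc_self hr
  have hB0 : 0 ≤ B := (norm_nonneg _).trans (hB r hr')
  have hA0 : 0 ≤ A := (norm_nonneg _).trans (hA r hr')
  refine norm_prod_le_iff.2 ⟨?_, ?_⟩
  · calc ‖β r * y r‖ ≤ B * ‖y r‖ := by rw [norm_mul]; gcongr; exact hB r hr'
      _ ≤ max B (A * C) * ‖(w r, y r)‖ := by
        gcongr
        exacts [le_max_left _ _, norm_snd_le (w r, y r)]
  · calc ‖-(f r * G (w r))‖ ≤ A * (C * ‖w r‖) := by
          rw [norm_neg, norm_mul]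
          gcongr
          exacts [hA r hr', hG r hr']
      _ = A * C * ‖w r‖ := (mul_assoc _ _ _).symm
      _ ≤ max B (A * C) * ‖(w r, y r)‖ := by
        gcongr
        exacts [le_max_right _ _, norm_fst_le (w r, y r)]

theorem eq_zero_of_right_eq_zero (h : IsFluxSolution β f G a b w y)
    (hβ : ContinuousOn β (Icc a b)) (hf : ContinuousOn f (Icc a b))
    (hG : ∀ r ∈ Icc a b, |G (w r)| ≤ C * |w r|) (hw : w b = 0) (hy : y b = 0) :
    ∀ r ∈ Icc a b, w r = 0 := by
  have hmaps : MapsTo Neg.neg (Icc (-b) (-a)) (Icc a b) := fun _ => neg_mem_Icc_iff.2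
  intro r hr
  simpa using h.comp_neg.eq_zero_of_left_eq_zero (hβ.comp continuousOn_neg hmaps)
    (hf.comp continuousOn_neg hmaps) (fun s hs => hG _ (hmaps hs)) (by simpa) (by simpa) (-r)
    (neg_mem_Icc_iff.2 (by simpa))

theorem pos_of_nonneg (h : IsFluxSolution β f G a b w y) (hβ : ContinuousOn β (Icc a b))
    (hβ0 : ∀ r ∈ Icc a b, 0 < β r) (hf : ContinuousOn f (Icc a b))
    (hG : ∀ r ∈ Icc a b, |G (w r)| ≤ C * |w r|) (hw : ∀ r ∈ Icc a b, 0 ≤ w r)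
    (ha : 0 < w a) (hb : 0 ≤ y b) : ∀ r ∈ Icc a b, 0 < w r := by
  intro t ht
  refine (hw t ht).lt_of_ne' fun hwt => ?_
  have hat : a < t := ht.1.lt_of_ne (by rintro rfl; exact ha.ne' hwt)
  have hmin : IsMinOn w (Icc a b) t := fun r hr => hwt.trans_le (hw r hr)
  have hslope {s : ℝ} (hs : s ∈ Icc a b) : 0 ≤ (s - t) * (β t * y t) :=
    mul_sub_nonneg_of_isMinOn (convex_Icc a b) hmin (h.hasDerivWithinAt t ht) ht hs
  have hyt_nonpos : y t ≤ 0 := by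
    have := nonpos_of_mul_nonneg_right (hslope (left_mem_Icc.2 (ht.1.trans ht.2))) (sub_neg.2 hat)
    exact nonpos_of_mul_nonpos_right this (hβ0 t ht)
  have hyt_nonneg : 0 ≤ y t := by
    rcases ht.2.eq_or_lt with rfl | htb
    · exact hb
    · have := nonneg_of_mul_nonneg_right (hslope (right_mem_Icc.2 (ht.1.trans ht.2)))
        (sub_pos.2 htb)
      exact nonneg_of_mul_nonneg_right this (hβ0 t ht)
  have hsub : Icc a t ⊆ Icc a b := Icc_subset_Icc_right ht.2
  exact ha.ne' ((h.mono le_rfl ht.2).eq_zero_of_right_eq_zero (hβ.mono hsub) (hf.mono hsub)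
    (fun r hr => hG r (hsub hr)) hwt (hyt_nonpos.antisymm hyt_nonneg) a (left_mem_Icc.2 hat.le))

theorem lt_and_flux_le_of_left (h : IsFluxSolution β f G a b w y)
    (hβ0 : ∀ r ∈ Icc a b, 0 ≤ β r) (hG : ∀ s, 0 ≤ G s) (hK : ∀ r ∈ Icc a b, 0 < f r → w r ≤ K)
    (hw : K < w a) (hy : 0 ≤ y a) : ∀ r ∈ Icc a b, K < w r ∧ y a ≤ y r := by
  have hflux {t : ℝ} (ht : t ∈ Icc a b) (hlt : ∀ r ∈ Ioo a t, K < w r) :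
      MonotoneOn y (Icc a t) :=
    (h.mono le_rfl ht.2).monotoneOn_flux fun r hr => mul_nonpos_of_nonpos_of_nonneg
      (not_lt.1 fun hfr => (hK r ⟨hr.1.le, hr.2.le.trans ht.2⟩ hfr).not_gt (hlt r hr)) (hG _)
  suffices hlt : ∀ r ∈ Icc a b, K < w r from fun r hr => ⟨hlt r hr,
    hflux hr (fun s hs => hlt s ⟨hs.1.le, hs.2.le.trans hr.2⟩) ⟨le_rfl, hr.1⟩ ⟨hr.1, le_rfl⟩ hr.1⟩
  by_contra! hexit
  obtain ⟨t, ⟨ht, hwt⟩, hfirst⟩ := (isCompact_Icc.of_isClosed_subset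
    (h.continuousOn.preimage_isClosed_of_isClosed isClosed_Icc isClosed_Iic)
    inter_subset_left).exists_isLeast hexit
  have hlt : ∀ r ∈ Ioo a t, K < w r := fun r hr => not_le.1 fun hle =>
    hr.2.not_ge (hfirst ⟨⟨hr.1.le, hr.2.le.trans ht.2⟩, hle⟩)
  have hmono : MonotoneOn w (Icc a t) := (h.mono le_rfl ht.2).monotoneOn fun r hr =>
    mul_nonneg (hβ0 r ⟨hr.1.le, hr.2.le.trans ht.2⟩)
      (hy.trans (hflux ht hlt ⟨le_rfl, ht.1⟩ ⟨hr.1.le, hr.2.le⟩ hr.1.le))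
  exact (hw.trans_le (hmono ⟨le_rfl, ht.1⟩ ⟨ht.1, le_rfl⟩ ht.1)).not_ge hwt

theorem left_le_of_flux_nonneg (h : IsFluxSolution β f G a b w y)
    (hβ0 : ∀ r ∈ Icc a b, 0 ≤ β r) (hG : ∀ s, 0 ≤ G s) (hf : ∃ r ∈ Icc a b, 0 < f r)
    (hK : ∀ r ∈ Icc a b, 0 < f r → w r ≤ K) (hy : 0 ≤ y a) : w a ≤ K := by
  by_contra! hw
  obtain ⟨r, hr, hfr⟩ := hf
  exact (h.lt_and_flux_le_of_left hβ0 hG hK hw hy r hr).1.not_ge (hK r hr hfr)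

theorem lt_and_le_flux_of_right (h : IsFluxSolution β f G a b w y)
    (hβ0 : ∀ r ∈ Icc a b, 0 ≤ β r) (hG : ∀ s, 0 ≤ G s) (hK : ∀ r ∈ Icc a b, 0 < f r → w r ≤ K)
    (hw : K < w b) (hy : y b ≤ 0) : ∀ r ∈ Icc a b, K < w r ∧ y r ≤ y b := by
  have hmaps : MapsTo Neg.neg (Icc (-b) (-a)) (Icc a b) := fun _ => neg_mem_Icc_iff.2
  intro r hr
  simpa using h.comp_neg.lt_and_flux_le_of_left (fun s hs => hβ0 _ (hmaps hs)) hG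
    (fun s hs => hK _ (hmaps hs)) (by simpa) (by simpa) (-r) (neg_mem_Icc_iff.2 (by simpa))

theorem le_of_flux_eq_zero (h : IsFluxSolution β f G a b w y)
    (hβ0 : ∀ r ∈ Icc a b, 0 ≤ β r) (hG : ∀ s, 0 ≤ G s) (hf : ∃ r ∈ Icc a b, 0 < f r)
    (hK : ∀ r ∈ Icc a b, 0 < f r → w r ≤ K) (ha : y a = 0) (hb : y b = 0) :
    ∀ r ∈ Icc a b, w r ≤ K := by
  intro t ht
  by_contra! hwt
  have hright := (h.mono ht.1 le_rfl).lt_and_flux_le_of_left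
    (fun r hr => hβ0 r ⟨ht.1.trans hr.1, hr.2⟩) hG (fun r hr => hK r ⟨ht.1.trans hr.1, hr.2⟩) hwt
  have hleft := (h.mono le_rfl ht.2).lt_and_le_flux_of_right
    (fun r hr => hβ0 r ⟨hr.1, hr.2.trans ht.2⟩) hG (fun r hr => hK r ⟨hr.1, hr.2.trans ht.2⟩) hwt
  have hyt : y t = 0 := by
    rcases le_total 0 (y t) with hpos | hneg
    · exact ((hright hpos b ⟨ht.2, le_rfl⟩).2.trans hb.le).antisymm hpos
    · exact hneg.antisymm (ha.ge.trans (hleft hneg a ⟨le_rfl, ht.1⟩).2)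
  obtain ⟨r, hr, hfr⟩ := hf
  rcases le_total t r with htr | hrt
  · exact (hright hyt.ge r ⟨htr, hr.2⟩).1.not_ge (hK r hr hfr)
  · exact (hleft hyt.le r ⟨hr.1, hrt⟩).1.not_ge (hK r hr hfr)

end IsFluxSolution
end FluxSystem

section MeanValue

variable {u u' : ℝ → ℝ} {a b C : ℝ}

theorem mul_sub_le_sub_of_le_hasDerivWithinAt (hab : a ≤ b)
    (hu : ∀ r ∈ Icc a b, HasDerivWithinAt u (u' r) (Icc a b) r) (hC : ∀ r ∈ Icc a b, C ≤ u' r) :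
    C * (b - a) ≤ u b - u a := by
  have hderiv : ∀ r ∈ interior (Icc a b), HasDerivAt u (u' r) r := fun r hr =>
    (hu r (interior_subset hr)).hasDerivAt (mem_interior_iff_mem_nhds.1 hr)
  exact (convex_Icc a b).mul_sub_le_image_sub_of_le_deriv
    (fun r hr => (hu r hr).continuousWithinAt)
    (fun r hr => (hderiv r hr).differentiableAt.differentiableWithinAt)
    (fun r hr => (hderiv r hr).deriv ▸ hC r (interior_subset hr))
    a (left_mem_Icc.2 hab) b (right_mem_Icc.2 hab) hab

theorem sub_le_mul_sub_of_hasDerivWithinAt_le (hab : a ≤ b)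
    (hu : ∀ r ∈ Icc a b, HasDerivWithinAt u (u' r) (Icc a b) r) (hC : ∀ r ∈ Icc a b, u' r ≤ C) :
    u b - u a ≤ C * (b - a) := by
  have := mul_sub_le_sub_of_le_hasDerivWithinAt hab (fun r hr => (hu r hr).fun_neg)
    fun r hr => neg_le_neg (hC r hr)
  linarith

end MeanValue

section Hump

variable {β f G w y : ℝ → ℝ} {a b c d e m q s t B M T l : ℝ}

namespace IsFluxSolution

theorem mul_flux_le (h : IsFluxSolution β f G a b w y) (hm : 0 ≤ m)
    (hβ : ∀ r ∈ Icc a b, m ≤ β r) (hf : ∀ r ∈ Icc a b, 0 ≤ f r) (hG : ∀ s, 0 ≤ G s)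
    (hw : ∀ r ∈ Icc a b, 0 ≤ w r) (he : 0 ≤ e) (hat : a + e ≤ t) (htb : t ≤ b) :
    m * e * y t ≤ w t := by
  have ht : t ∈ Icc a b := ⟨by linarith, htb⟩
  rcases le_total (y t) 0 with hy | hy
  · exact (mul_nonpos_of_nonneg_of_nonpos (mul_nonneg hm he) hy).trans (hw t ht)
  have hslope := mul_sub_le_sub_of_le_hasDerivWithinAt (C := m * y t) ht.1
    (h.mono le_rfl htb).hasDerivWithinAt fun r hr => by
      have hr' : r ∈ Icc a b := ⟨hr.1, hr.2.trans htb⟩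
      have hyr : y t ≤ y r := h.antitoneOn_flux
        (fun r hr => mul_nonneg (hf r (Ioo_subset_Icc_self hr)) (hG _)) hr' ht hr.2
      exact mul_le_mul (hβ r hr') hyr hy (hm.trans (hβ r hr'))
  calc m * e * y t = m * y t * e := by ring
    _ ≤ m * y t * (t - a) := by gcongr; linarith
    _ ≤ w t := by linarith [hw a ⟨le_rfl, ht.1.trans htb⟩]

theorem neg_mul_flux_le (h : IsFluxSolution β f G a b w y) (hm : 0 ≤ m)
    (hβ : ∀ r ∈ Icc a b, m ≤ β r) (hf : ∀ r ∈ Icc a b, 0 ≤ f r) (hG : ∀ s, 0 ≤ G s)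
    (hw : ∀ r ∈ Icc a b, 0 ≤ w r) (he : 0 ≤ e) (hat : a ≤ t) (htb : t ≤ b - e) :
    -(m * e * y t) ≤ w t := by
  have hmaps : MapsTo Neg.neg (Icc (-b) (-a)) (Icc a b) := fun _ => neg_mem_Icc_iff.2
  simpa using h.comp_neg.mul_flux_le (t := -t) hm (fun r hr => hβ _ (hmaps hr))
    (fun r hr => hf _ (hmaps hr)) hG (fun r hr => hw _ (hmaps hr)) he (by linarith)
    (neg_le_neg hat)

theorem le_mul_of_add_le (h : IsFluxSolution β f G a b w y) (hm : 0 < m)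
    (hβ : ∀ r ∈ Icc a b, β r ∈ Icc m B) (hf : ∀ r ∈ Icc a b, 0 ≤ f r) (hG : ∀ s, 0 ≤ G s)
    (hw : ∀ r ∈ Icc a b, 0 ≤ w r) (he : 0 < e) (hat : a + e ≤ t) (hts : t ≤ s) (hsb : s ≤ b) :
    w s ≤ (1 + B * (b - a) / (m * e)) * w t := by
  have ht : t ∈ Icc a b := ⟨by linarith, hts.trans hsb⟩
  have hB : 0 ≤ B := hm.le.trans ((hβ t ht).1.trans (hβ t ht).2)
  set Y := w t / (m * e)
  have hY : 0 ≤ Y := div_nonneg (hw t ht) (by positivity)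
  have hyt : y t ≤ Y := (le_div_iff₀' (by positivity)).2
    (h.mul_flux_le hm.le (fun r hr => (hβ r hr).1) hf hG hw he.le hat ht.2)
  have hgrowth := sub_le_mul_sub_of_hasDerivWithinAt_le (C := B * Y) hts
    (h.mono ht.1 hsb).hasDerivWithinAt fun r hr => by
      have hr' : r ∈ Icc a b := ⟨ht.1.trans hr.1, hr.2.trans hsb⟩
      have hyr : y r ≤ y t := h.antitoneOn_flux
        (fun r hr => mul_nonneg (hf r (Ioo_subset_Icc_self hr)) (hG _)) ht hr' hr.1
      have hβr := hβ r hr'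
      exact (mul_le_mul_of_nonneg_left (hyr.trans hyt) (hm.le.trans hβr.1)).trans
        (mul_le_mul_of_nonneg_right hβr.2 hY)
  calc w s ≤ w t + B * Y * (s - t) := by linarith
    _ ≤ w t + B * Y * (b - a) := by gcongr; exact ht.1
    _ = (1 + B * (b - a) / (m * e)) * w t := by simp only [Y]; ring

theorem harnack (h : IsFluxSolution β f G a b w y) (hm : 0 < m)
    (hβ : ∀ r ∈ Icc a b, β r ∈ Icc m B) (hf : ∀ r ∈ Icc a b, 0 ≤ f r) (hG : ∀ s, 0 ≤ G s)
    (hw : ∀ r ∈ Icc a b, 0 ≤ w r) (he : 0 < e) (ht : t ∈ Icc (a + e) (b - e))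
    (hs : s ∈ Icc a b) : w s ≤ (1 + B * (b - a) / (m * e)) * w t := by
  rcases le_total t s with hts | hst
  · exact h.le_mul_of_add_le hm hβ hf hG hw he ht.1 hts hs.2
  · have hmaps : MapsTo Neg.neg (Icc (-b) (-a)) (Icc a b) := fun _ => neg_mem_Icc_iff.2
    have := h.comp_neg.le_mul_of_add_le (e := e) (t := -t) (s := -s) hm
      (fun r hr => hβ _ (hmaps hr)) (fun r hr => hf _ (hmaps hr)) hG
      (fun r hr => hw _ (hmaps hr)) he (by linarith [ht.2]) (neg_le_neg hst) (neg_le_neg hs.1)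
    simpa [neg_add_eq_sub] using this

theorem mul_mul_sub_le_flux_sub_flux (h : IsFluxSolution β f G a b w y) (hab : a ≤ b)
    (hq : 0 ≤ q) (hfq : ∀ r ∈ Icc a b, q ≤ f r) (hl : 0 ≤ l) (hG : ∀ r ∈ Icc a b, l ≤ G (w r)) :
    q * l * (b - a) ≤ y a - y b := by
  have := sub_le_mul_sub_of_hasDerivWithinAt_le (C := -(q * l)) hab h.hasDerivWithinAt_flux
    fun r hr => neg_le_neg (mul_le_mul (hfq r hr) (hG r hr) hl (hq.trans (hfq r hr)))
  linarith

theorem le_of_hump (h : IsFluxSolution β f G a b w y) (hm : 0 < m)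
    (hβ : ∀ r ∈ Icc a b, β r ∈ Icc m B) (hf : ∀ r ∈ Icc a b, 0 ≤ f r) (hG : ∀ s, 0 ≤ G s)
    (hw : ∀ r ∈ Icc a b, 0 ≤ w r) (he : 0 < e) (hac : a + e ≤ c) (hcd : c ≤ d) (hdb : d ≤ b - e)
    (hT : T = 1 + B * (b - a) / (m * e)) (hl : 0 ≤ l) (hM : 0 ≤ M)
    (hGl : ∀ s, l * (s - M) ≤ G s) (hq : 0 ≤ q) (hfq : ∀ r ∈ Icc c d, q ≤ f r)
    (hlarge : 2 * T * (1 + T) < q * l * (d - c) * (m * e)) :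
    ∀ r ∈ Icc a b, w r ≤ 2 * T ^ 2 * M := by
  have hcd' : Icc c d ⊆ Icc (a + e) (b - e) := Icc_subset_Icc hac hdb
  have hin : Icc c d ⊆ Icc a b := Icc_subset_Icc (by linarith) (by linarith)
  have hc : c ∈ Icc c d := left_mem_Icc.2 hcd
  have hd : d ∈ Icc c d := right_mem_Icc.2 hcd
  have hharnack : ∀ r ∈ Icc c d, ∀ s ∈ Icc a b, w s ≤ T * w r := fun r hr s hs =>
    hT ▸ h.harnack hm hβ hf hG hw he (hcd' hr) hs
  have hT1 : 1 ≤ T := by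
    have hB : 0 ≤ B := hm.le.trans ((hβ c (hin hc)).1.trans (hβ c (hin hc)).2)
    have : 0 ≤ b - a := by linarith
    rw [hT, le_add_iff_nonneg_right]
    positivity
  -- Otherwise `G (w r) ≥ l w(c) / (2T)` on `[c, d]` by Harnack, and integrating over `[c, d]` makes
  -- the flux drop by more than `mul_flux_le` and `neg_mul_flux_le` allow.
  suffices hwc : w c ≤ 2 * T * M from fun r hr =>
    calc w r ≤ T * w c := hharnack c hc r hr
      _ ≤ T * (2 * T * M) := by gcongr
      _ = 2 * T ^ 2 * M := by ring
  by_contra! hwc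
  set V := w c / (2 * T)
  have hV : w c = 2 * T * V := (mul_div_cancel₀ _ (by positivity)).symm
  have hMV : M < V := by rwa [hV, mul_lt_mul_iff_right₀ (by positivity)] at hwc
  have hGV : ∀ r ∈ Icc c d, l * V ≤ G (w r) := fun r hr => by
    have hVr : T * (2 * V) ≤ T * w r := by linarith [hharnack r hr c (hin hc)]
    have hVr' : V ≤ w r - M := by linarith [le_of_mul_le_mul_left hVr (by positivity)]
    exact (mul_le_mul_of_nonneg_left hVr' hl).trans (hGl _)
  have hdrop : q * (l * V) * (d - c) ≤ y c - y d :=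
    (h.mono (hin hc).1 (hin hd).2).mul_mul_sub_le_flux_sub_flux hcd hq hfq
      (mul_nonneg hl (hM.trans hMV.le)) hGV
  have hyc : m * e * y c ≤ w c :=
    h.mul_flux_le hm.le (fun r hr => (hβ r hr).1) hf hG hw he.le hac (hin hc).2
  have hyd : -(m * e * y d) ≤ w d :=
    h.neg_mul_flux_le hm.le (fun r hr => (hβ r hr).1) hf hG hw he.le (hin hd).1 hdb
  have : q * l * (d - c) * (m * e) * V ≤ 2 * T * (1 + T) * V :=
    calc q * l * (d - c) * (m * e) * V = m * e * (q * (l * V) * (d - c)) := by ring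
      _ ≤ m * e * (y c - y d) := by gcongr
      _ ≤ w c + T * w c := by linarith [hharnack c hc d (hin hd)]
      _ = 2 * T * (1 + T) * V := by rw [hV]; ring
  exact (mul_lt_mul_of_pos_right hlarge (hM.trans_lt hMV)).not_ge this

end IsFluxSolution
end Hump

section APrioriBound

variable {β f : ℝ → ℝ} {a b m B l M : ℝ}

theorem exists_Icc_subset_and_le_of_pos {ι : Type*} [Finite ι] {J : ι → Set ℝ} {i : ι} {r : ℝ}
    (hab : a < b) (hf : ContinuousOn f (Icc a b)) (hJ : ∀ j, IsClosed (J j))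
    (hdisj : Pairwise fun j k => Disjoint (J j) (J k))
    (hout : ∀ x ∈ Icc a b \ ⋃ j, J j, f x ≤ 0) (hr : r ∈ Icc a b) (hri : r ∈ J i)
    (hfr : 0 < f r) : ∃ q > 0, ∃ x, ∃ δ > 0, Icc (x - 2 * δ) (x + 2 * δ) ⊆ J i ∧
      ∀ z ∈ Icc (x - 2 * δ) (x + 2 * δ), q ≤ f z := by
  -- `r` may be an endpoint of `J i`. A nearby point of `(a, b)` at which `f > 0` avoids the other
  -- sets `J j`, so it lies in `J i` together with a neighbourhood.
  set U := Ioo a b ∩ f ⁻¹' Ioi (f r / 2)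
  set V := ⋂ j, ⋂ _ : j ≠ i, (J j)ᶜ
  have hV : IsOpen V := isOpen_iInter_of_finite fun j => isOpen_iInter_of_finite fun _ =>
    (hJ j).isOpen_compl
  have hUV : IsOpen (U ∩ V) := ((hf.mono Ioo_subset_Icc_self).isOpen_inter_preimage isOpen_Ioo
    isOpen_Ioi).inter hV
  have hrV : r ∈ V := mem_iInter₂.2 fun j hji hrj => disjoint_left.1 (hdisj hji) hrj hri
  have : (𝓝[Ioo a b] r).NeBot := mem_closure_iff_nhdsWithin_neBot.1 (by rwa [closure_Ioo hab.ne])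
  have hfx : ∀ᶠ x in 𝓝[Ioo a b] r, f r / 2 < f x :=
    ((hf r hr).mono Ioo_subset_Icc_self).eventually (lt_mem_nhds (half_lt_self hfr))
  have hxV : ∀ᶠ x in 𝓝[Ioo a b] r, x ∈ V := mem_nhdsWithin_of_mem_nhds (hV.mem_nhds hrV)
  obtain ⟨x, hxab, hfx, hxV⟩ := (eventually_mem_nhdsWithin.and (hfx.and hxV)).exists
  obtain ⟨ε, hε, hball⟩ := Metric.isOpen_iff.1 hUV x ⟨⟨hxab, hfx⟩, hxV⟩
  have hIcc : Icc (x - 2 * (ε / 3)) (x + 2 * (ε / 3)) ⊆ U ∩ V := by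
    rw [← Real.closedBall_eq_Icc]
    exact (Metric.closedBall_subset_ball (by linarith)).trans hball
  refine ⟨f r / 2, half_pos hfr, x, ε / 3, by positivity, fun z hz => ?_,
    fun z hz => (hIcc hz).1.2.le⟩
  obtain ⟨⟨hzab, hfz⟩, hzV⟩ := hIcc hz
  by_contra hzi
  refine (hout z ⟨Ioo_subset_Icc_self hzab, fun hzJ => ?_⟩).not_gt ((half_pos hfr).trans hfz)
  obtain ⟨j, hzj⟩ := mem_iUnion.1 hzJ
  exact mem_iInter₂.1 hzV j (by rintro rfl; exact hzi hzj) hzj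

namespace CondQ1

theorem exists_pos (hq : CondQ1 a b f) : ∃ r ∈ Icc a b, 0 < f r := by
  obtain ⟨n, σ, τ, hn, hστ, -, -, hpos, -⟩ := hq
  obtain ⟨r, hr, hfr⟩ := hpos ⟨0, hn⟩
  exact ⟨r, ⟨(hστ _).1.trans hr.1, hr.2.trans (hστ _).2.2⟩, hfr⟩

theorem mul {p : ℝ → ℝ} (hq : CondQ1 a b f) (hp : ∀ r ∈ Icc a b, 0 < p r) :
    CondQ1 a b (fun r => p r * f r) := by
  obtain ⟨n, σ, τ, hn, hστ, hdisj, hnonneg, hpos, hout⟩ := hq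
  have hin (i : Fin n) : Icc (σ i) (τ i) ⊆ Icc a b := Icc_subset_Icc (hστ i).1 (hστ i).2.2
  refine ⟨n, σ, τ, hn, hστ, hdisj, fun i r hr => mul_nonneg (hp r (hin i hr)).le (hnonneg i r hr),
    fun i => ?_, fun r hr => mul_nonpos_of_nonneg_of_nonpos (hp r hr.1).le (hout r hr)⟩
  obtain ⟨r, hr, hfr⟩ := hpos i
  exact ⟨r, hr, mul_pos (hp r (hin i hr)) hfr⟩

theorem exists_eventually_le (hq : CondQ1 a b f) (hab : a < b) (hf : ContinuousOn f (Icc a b))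
    (hm : 0 < m) (hβ : ∀ r ∈ Icc a b, β r ∈ Icc m B) (hl : 0 < l) (hM : 0 ≤ M) :
    ∃ K, ∀ᶠ ν in atTop, ∀ G w y, IsFluxSolution β (fun r => ν * f r) G a b w y →
      (∀ s, 0 ≤ G s) → (∀ s, l * (s - M) ≤ G s) → (∀ r ∈ Icc a b, 0 ≤ w r) →
        ∀ r ∈ Icc a b, 0 < f r → w r ≤ K := by
  obtain ⟨n, σ, τ, -, hστ, hdisj, hnonneg, hpos, hout⟩ := hq
  have hin (i : Fin n) : Icc (σ i) (τ i) ⊆ Icc a b := Icc_subset_Icc (hστ i).1 (hστ i).2.2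
  have hhump (i : Fin n) : ∃ K, ∀ᶠ ν in atTop, ∀ G w y,
      IsFluxSolution β (fun r => ν * f r) G a b w y → (∀ s, 0 ≤ G s) →
        (∀ s, l * (s - M) ≤ G s) → (∀ r ∈ Icc a b, 0 ≤ w r) →
          ∀ r ∈ Icc (σ i) (τ i), w r ≤ K := by
    obtain ⟨r, hr, hfr⟩ := hpos i
    obtain ⟨q, hq, x, δ, hδ, hsub, hqf⟩ := exists_Icc_subset_and_le_of_pos hab hf
      (fun _ => isClosed_Icc) hdisj hout (hin i hr) hr hfr
    have hleft := (hsub ⟨le_rfl, by linarith⟩).1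
    have hright := (hsub ⟨by linarith, le_rfl⟩).2
    set T := 1 + B * (τ i - σ i) / (m * δ) with hT
    have hlarge : ∀ᶠ ν in atTop, 2 * T * (1 + T) < ν * (q * l * (x + δ - (x - δ)) * (m * δ)) :=
      (tendsto_id.atTop_mul_const (mul_pos (mul_pos (by positivity) (by linarith))
        (by positivity))).eventually_gt_atTop _
    refine ⟨2 * T ^ 2 * M, ?_⟩
    filter_upwards [hlarge, eventually_ge_atTop 0] with ν hν hν0 G w y h hG hGl hw
    exact (h.mono (hστ i).1 (hστ i).2.2).le_of_hump (c := x - δ) (d := x + δ) (q := ν * q) hm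
      (fun r hr => hβ r (hin i hr)) (fun r hr => mul_nonneg hν0 (hnonneg i r hr)) hG
      (fun r hr => hw r (hin i hr)) hδ (by linarith) (by linarith) (by linarith) hT hl.le hM hGl
      (by positivity)
      (fun r hr => mul_le_mul_of_nonneg_left
        (hqf r ⟨by linarith [hr.1], by linarith [hr.2]⟩) hν0) (hν.trans_eq (by ring))
  choose K hK using hhump
  obtain ⟨K', hK'⟩ := (finite_range K).bddAbove
  refine ⟨K', (eventually_all.2 hK).mono fun ν hν G w y h hG hGl hw r hr hfr => ?_⟩
  obtain ⟨i, hi⟩ : ∃ i, r ∈ Icc (σ i) (τ i) := by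
    by_contra hcon
    exact (hout r ⟨hr, by simpa only [mem_iUnion] using hcon⟩).not_gt hfr
  exact (hν i G w y h hG hGl hw r hi).trans (hK' (mem_range_self i))

end CondQ1
end APrioriBound

section SmallData

variable {β f G w y : ℝ → ℝ} {a b c A B D θ ρ : ℝ}

namespace IsFluxSolution

theorem abs_flux_le (h : IsFluxSolution β f G a b w y)
    (hfG : ∀ r ∈ Ico a b, |f r * G (w r)| ≤ D) (hy : y a = 0) :
    ∀ r ∈ Icc a b, |y r| ≤ D * (r - a) := fun r hr => by
  simpa [hy] using norm_image_sub_le_of_norm_deriv_le_segment' h.hasDerivWithinAt_flux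
    (fun s hs => (norm_neg _).trans_le (hfG s hs)) r hr

theorem abs_sub_left_lt (h : IsFluxSolution β f G a b w y) (hβ : ∀ r ∈ Icc a b, |β r| ≤ B)
    (hf : ∀ r ∈ Icc a b, |f r| ≤ A) (hD : 0 ≤ D) (hG : ∀ s, |s - w a| < ρ → |G s| ≤ D)
    (hy : y a = 0) (hρ : B * (A * D * (b - a)) * (b - a) < ρ) : ∀ r ∈ Icc a b, |w r - w a| < ρ := by
  by_contra! hexit
  obtain ⟨t, ⟨ht, hwt⟩, hfirst⟩ := (isCompact_Icc.of_isClosed_subset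
    ((h.continuousOn.sub continuousOn_const).abs.preimage_isClosed_of_isClosed isClosed_Icc
      isClosed_Ici) inter_subset_left).exists_isLeast hexit
  have hin : Icc a t ⊆ Icc a b := Icc_subset_Icc_right ht.2
  have hband : ∀ r ∈ Ico a t, |w r - w a| < ρ := fun r hr => not_le.1 fun hle =>
    hr.2.not_ge (hfirst ⟨hin (Ico_subset_Icc_self hr), hle⟩)
  have ha : a ∈ Icc a b := ⟨le_rfl, ht.1.trans ht.2⟩
  have hA : 0 ≤ A := (abs_nonneg _).trans (hf a ha)
  have hB : 0 ≤ B := (abs_nonneg _).trans (hβ a ha)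
  have hfG : ∀ r ∈ Ico a t, |f r * G (w r)| ≤ A * D := fun r hr => by
    rw [abs_mul]
    exact mul_le_mul (hf r (hin (Ico_subset_Icc_self hr))) (hG _ (hband r hr)) (abs_nonneg _) hA
  have hflux : ∀ r ∈ Icc a t, |y r| ≤ A * D * (b - a) := fun r hr =>
    ((h.mono le_rfl ht.2).abs_flux_le hfG hy r hr).trans (by gcongr; exact (hin hr).2)
  have hw := norm_image_sub_le_of_norm_deriv_le_segment' (C := B * (A * D * (b - a)))
    (h.mono le_rfl ht.2).hasDerivWithinAt (fun s hs => by
      rw [norm_mul]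
      exact mul_le_mul (hβ s (hin (Ico_subset_Icc_self hs)))
        (hflux s (Ico_subset_Icc_self hs)) (norm_nonneg _) hB) t ⟨ht.1, le_rfl⟩
  have : B * (A * D * (b - a)) * (t - a) ≤ B * (A * D * (b - a)) * (b - a) := by
    have := sub_nonneg.2 (ht.1.trans ht.2)
    gcongr
    exact ht.2
  exact (hw.trans this).not_gt (hρ.trans_le hwt)

theorem flux_lt_flux_of_abs_sub_le (h : IsFluxSolution β f G a b w y) (hab : a ≤ b)
    (hf : ContinuousOn f (Icc a b)) (hfA : ∀ r ∈ Icc a b, |f r| ≤ A) (hG : Continuous G)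
    (hc : 0 < c) (hGc : ∀ r ∈ Icc a b, |G (w r) - c| ≤ θ * c)
    (hθ : A * θ * (b - a) < -∫ r in a..b, f r) : y a < y b := by
  have hIcc : uIoc a b ⊆ Icc a b := (uIoc_of_le hab).trans_subset Ioc_subset_Icc_self
  have hGw : ContinuousOn (fun r => f r * G (w r)) (Icc a b) :=
    hf.mul (hG.comp_continuousOn h.continuousOn)
  have hftc : ∫ r in a..b, -(f r * G (w r)) = y b - y a :=
    intervalIntegral.integral_eq_sub_of_hasDerivAt_of_le hab h.continuousOn_flux
      (fun r hr => (h.hasDerivWithinAt_flux r (Ioo_subset_Icc_self hr)).hasDerivAt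
        (Icc_mem_nhds hr.1 hr.2)) (hGw.neg.intervalIntegrable_of_Icc hab)
  have hdev : ‖∫ r in a..b, f r * (G (w r) - c)‖ ≤ A * (θ * c) * |b - a| :=
    intervalIntegral.norm_integral_le_of_norm_le_const fun r hr => by
      rw [norm_mul]
      exact mul_le_mul (hfA r (hIcc hr)) (hGc r (hIcc hr)) (norm_nonneg _)
        ((abs_nonneg _).trans (hfA r (hIcc hr)))
  have hsplit : ∫ r in a..b, f r * (G (w r) - c) =
      -(y b - y a) - c * ∫ r in a..b, f r := by
    rw [← hftc, intervalIntegral.integral_neg, neg_neg, ← intervalIntegral.integral_const_mul,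
      ← intervalIntegral.integral_sub (hGw.intervalIntegrable_of_Icc hab)
        ((hf.intervalIntegrable_of_Icc hab).const_mul c)]
    exact intervalIntegral.integral_congr fun r _ => by ring
  rw [hsplit, abs_of_nonneg (sub_nonneg.2 hab)] at hdev
  have := mul_lt_mul_of_pos_right hθ hc
  linarith [neg_le_of_abs_le hdev, le_of_abs_le hdev]

end IsFluxSolution

namespace RegOscAtZero

theorem exists_eventually_abs_sub_le (hG : RegOscAtZero G) (hpos : ∀ s, 0 < s → 0 < G s)
    (hθ : 0 < θ) : ∃ η > 0, η ≤ 1 ∧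
      ∀ᶠ α in 𝓝[>] 0, ∀ s, |s - α| < η * α → |G s - G α| ≤ θ * G α := by
  obtain ⟨δ, hδ, η, hη, hosc⟩ := hG θ hθ
  refine ⟨min η 1, lt_min hη one_pos, min_le_right _ _, ?_⟩
  filter_upwards [Ioo_mem_nhdsGT hδ] with α ⟨hα, hαδ⟩ s hs
  have hω : |s / α - 1| < η := by
    rw [div_sub_one hα.ne', abs_div, abs_of_pos hα, div_lt_iff₀ hα]
    exact hs.trans_le (by gcongr; exact min_le_left _ _)
  have := (hosc α (s / α) hα hαδ hω).le
  rwa [div_mul_cancel₀ _ hα.ne', div_sub_one (hpos α hα).ne', abs_div, abs_of_pos (hpos α hα),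
    div_le_iff₀ (hpos α hα)] at this

theorem exists_pos_and_flux_pos (hG : RegOscAtZero G) (hpos : ∀ s, 0 < s → 0 < G s)
    (hG0 : Tendsto (fun s => G s / s) (𝓝[>] 0) (𝓝 0)) (hab : a ≤ b)
    (hβ : ContinuousOn β (Icc a b)) (hf : ContinuousOn f (Icc a b))
    (hint : ∫ r in a..b, f r < 0) : ∃ α > 0, ∃ ε > 0, ∀ H w y, Continuous H →
      (∀ s ∈ Icc 0 (2 * α), |H s - G s| ≤ ε) → IsFluxSolution β f H a b w y → w a = α →
        y a = 0 → (∀ r ∈ Icc a b, 0 < w r) ∧ 0 < y b := by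
  obtain ⟨B, hB⟩ := isCompact_Icc.exists_bound_of_continuousOn hβ
  obtain ⟨A, hA⟩ := isCompact_Icc.exists_bound_of_continuousOn hf
  have hθlim : Tendsto (fun θ => A * θ * (b - a)) (𝓝[>] 0) (𝓝 0) :=
    ((by fun_prop : Continuous fun θ => A * θ * (b - a)).tendsto' 0 0 (by simp)).mono_left
      nhdsWithin_le_nhds
  obtain ⟨θ, hθsmall, hθ, hθ1⟩ := ((hθlim.eventually_lt_const (neg_pos.2 hint)).and
    (Ioc_mem_nhdsGT one_pos)).exists
  obtain ⟨η, hη, hη1, hosc⟩ := hG.exists_eventually_abs_sub_le hpos (half_pos hθ)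
  have hdrift : ∀ᶠ α in 𝓝[>] 0, G α / α * (B * (A * 2 * (b - a)) * (b - a)) < η :=
    (hG0.mul_const _).eventually_lt_const (by rwa [zero_mul])
  obtain ⟨α, hα, hosc, hdrift⟩ := (eventually_mem_nhdsWithin.and (hosc.and hdrift)).exists
  have hGα := hpos α hα
  refine ⟨α, hα, θ / 2 * G α, by positivity, fun H w y hH hHG h hwa hya => ?_⟩
  have hηα : η * α ≤ α := mul_le_of_le_one_left (le_of_lt hα) hη1
  have hHα : ∀ s, |s - α| < η * α → |H s - G α| ≤ θ * G α := fun s hs => by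
    obtain ⟨h1, h2⟩ := abs_lt.1 hs
    calc |H s - G α| ≤ |H s - G s| + |G s - G α| := abs_sub_le _ _ _
      _ ≤ θ / 2 * G α + θ / 2 * G α :=
        add_le_add (hHG s ⟨by linarith, by linarith⟩) (hosc s hs)
      _ = θ * G α := by ring
  have hband : ∀ r ∈ Icc a b, |w r - α| < η * α := by
    refine hwa ▸ h.abs_sub_left_lt hB hA (D := 2 * G α) (by positivity) (fun s hs => ?_) hya ?_
    · have hθG : θ * G α ≤ G α := mul_le_of_le_one_left hGα.le hθ1
      have := hHα s (hwa ▸ hs)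
      exact abs_le.2 ⟨by linarith [neg_le_of_abs_le this], by linarith [le_of_abs_le this]⟩
    · rw [div_mul_eq_mul_div, div_lt_iff₀ hα] at hdrift
      rw [hwa]
      linarith
  refine ⟨fun r hr => by linarith [neg_lt_of_abs_lt (hband r hr)], hya ▸
    h.flux_lt_flux_of_abs_sub_le hab hf hA hH hGα (fun r hr => hHα _ (hband r hr)) hθsmall⟩

end RegOscAtZero
end SmallData

section Shooting

variable {β f G : ℝ → ℝ} {a b α K : ℝ} {L : ℝ≥0}

theorem lipschitzWith_fluxField {A B : ℝ≥0} {r : ℝ} (hG : LipschitzWith L G) (hβ : |β r| ≤ B)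
    (hf : |f r| ≤ A) : LipschitzWith (max B (A * L)) (fluxField β f G r) := by
  refine LipschitzWith.prodMk (LipschitzWith.of_dist_le_mul fun z z' => ?_)
    (LipschitzWith.of_dist_le_mul fun z z' => ?_)
  · rw [Real.dist_eq, ← mul_sub, abs_mul]
    exact mul_le_mul hβ (le_max_right _ _) (abs_nonneg _) B.2
  · rw [Real.dist_eq, ← neg_sub', abs_neg, ← mul_sub, abs_mul, NNReal.coe_mul, mul_assoc]
    exact mul_le_mul hf ((hG.dist_le_mul _ _).trans (by gcongr; exact le_max_left _ _))
      (abs_nonneg _) A.2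

theorem exists_lipschitzWith_isFluxSolution (hab : a ≤ b) (hβ : ContinuousOn β (Icc a b))
    (hf : ContinuousOn f (Icc a b)) (hG : LipschitzWith L G) :
    ∃ w y : ℝ → ℝ → ℝ, (∀ α, IsFluxSolution β f G a b (w α) (y α) ∧ w α a = α ∧ y α a = 0) ∧
      ∃ C : ℝ≥0, ∀ r ∈ Icc a b, LipschitzWith C (w · r) ∧ LipschitzWith C (y · r) := by
  obtain ⟨B, hB⟩ := isCompact_Icc.exists_bound_of_continuousOn hβ
  obtain ⟨A, hA⟩ := isCompact_Icc.exists_bound_of_continuousOn hf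
  have hlip : ∀ r ∈ Icc a b, LipschitzWith (max B.toNNReal (A.toNNReal * L)) (fluxField β f G r) :=
    fun r hr => lipschitzWith_fluxField hG ((hB r hr).trans (Real.le_coe_toNNReal B))
      ((hA r hr).trans (Real.le_coe_toNNReal A))
  have hcont (z : ℝ × ℝ) : ContinuousOn (fluxField β f G · z) (Icc a b) :=
    (hβ.mul continuousOn_const).prodMk (hf.mul continuousOn_const).neg
  choose γ hγa hγ using fun α : ℝ =>
    exists_isIntegralCurveOn_Icc_of_lipschitzWith hab hlip hcont (α, 0)
  have hdist (r) (hr : r ∈ Icc a b) (α α' : ℝ) : dist (γ α r) (γ α' r) ≤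
      (Real.exp (max B.toNNReal (A.toNNReal * L) * (b - a))).toNNReal * dist α α' := by
    refine (dist_le_of_isIntegralCurveOn_Icc hlip (hγ α) (hγ α') hr).trans ?_
    rw [hγa, hγa, dist_prod_same_right, mul_comm, Real.coe_toNNReal _ (Real.exp_nonneg _)]
    gcongr
    exact hr.2
  exact ⟨fun α r => (γ α r).1, fun α r => (γ α r).2, fun α =>
    ⟨isFluxSolution_iff_isIntegralCurveOn.2 (hγ α), congrArg Prod.fst (hγa α),
      congrArg Prod.snd (hγa α)⟩, _, fun r hr =>
    ⟨.of_dist_le_mul fun α α' => (le_max_left _ _).trans (hdist r hr α α'),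
      .of_dist_le_mul fun α α' => (le_max_right _ _).trans (hdist r hr α α')⟩⟩

theorem eventually_forall_pos_of_lipschitzWith {X Y : Type*} [PseudoMetricSpace X]
    [TopologicalSpace Y] {u : X → Y → ℝ} {s : Set Y} {x : X} (hs : IsCompact s)
    (hu : ∀ z ∈ s, LipschitzWith L (u · z)) (hc : ContinuousOn (u x) s)
    (hpos : ∀ z ∈ s, 0 < u x z) : ∀ᶠ x' in 𝓝 x, ∀ z ∈ s, 0 < u x' z := by
  obtain ⟨ε, hε, hle⟩ := hs.exists_forall_le' hc hpos
  have hsmall : ∀ᶠ x' in 𝓝 x, L * dist x x' < ε :=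
    ((by fun_prop : Continuous fun x' => L * dist x x').tendsto' x 0 (by simp)).eventually_lt_const
      hε
  filter_upwards [hsmall] with x' hx' z hz
  have := (hu z hz).dist_le_mul x x'
  linarith [hle z hz, le_of_abs_le this]

theorem exists_neumann_of_lipschitzWith (hβ : ContinuousOn β (Icc a b))
    (hβ0 : ∀ r ∈ Icc a b, 0 < β r) (hf : ContinuousOn f (Icc a b))
    (hfpos : ∃ r ∈ Icc a b, 0 < f r) (hG : LipschitzWith L G) (hG0 : G 0 = 0)
    (hGnonneg : ∀ s, 0 ≤ G s) (hα : 0 < α)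
    (hstart : ∀ w y, IsFluxSolution β f G a b w y → w a = α → y a = 0 →
      (∀ r ∈ Icc a b, 0 ≤ w r) ∧ 0 ≤ y b)
    (hK : ∀ w y, IsFluxSolution β f G a b w y → (∀ r ∈ Icc a b, 0 ≤ w r) →
      ∀ r ∈ Icc a b, 0 < f r → w r ≤ K) :
    ∃ w y, IsFluxSolution β f G a b w y ∧ (∀ r ∈ Icc a b, w r ∈ Icc 0 K) ∧ α ≤ w a ∧
      y a = 0 ∧ y b = 0 := by
  have hab : a ≤ b := let ⟨_, hr, _⟩ := hfpos; hr.1.trans hr.2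
  have hb : b ∈ Icc a b := right_mem_Icc.2 hab
  obtain ⟨w, y, hwy, C, hC⟩ := exists_lipschitzWith_isFluxSolution hab hβ hf hG
  set P := {z | α ≤ z ∧ (∀ r ∈ Icc a b, 0 ≤ w z r) ∧ 0 ≤ y z b} with hP
  have hPα : α ∈ P := ⟨le_rfl, hstart _ _ (hwy α).1 (hwy α).2.1 (hwy α).2.2⟩
  have hPK : ∀ z ∈ P, z ≤ K := fun z ⟨_, hz, _⟩ => by
    obtain ⟨hsol, hza, hya⟩ := hwy z
    exact hza ▸ hsol.left_le_of_flux_nonneg (fun r hr => (hβ0 r hr).le) hGnonneg hfpos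
      (hK _ _ hsol hz) hya.ge
  have hPclosed : IsClosed P := by
    simp only [hP, ofPred_and, ofPred_forall]
    exact isClosed_Ici.inter ((isClosed_biInter fun r hr => isClosed_le continuous_const
      (hC r hr).1.continuous).inter (isClosed_le continuous_const (hC b hb).2.continuous))
  obtain ⟨z, ⟨hαz, hz, hyz⟩, hmax⟩ := (isCompact_Icc.of_isClosed_subset hPclosed
    fun z hz => ⟨hz.1, hPK z hz⟩).exists_isGreatest ⟨α, hPα⟩
  obtain ⟨hsol, hza, hya⟩ := hwy z
  have hyb : y z b = 0 := by
    refine hyz.antisymm' (not_lt.1 fun hlt => ?_)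
    have hpos : ∀ r ∈ Icc a b, 0 < w z r := hsol.pos_of_nonneg hβ hβ0 hf (fun r _ => by
      simpa [Real.dist_eq, hG0] using hG.dist_le_mul (w z r) 0) hz (hza.symm ▸ hα.trans_le hαz) hyz
    have hw := eventually_forall_pos_of_lipschitzWith isCompact_Icc (fun r hr => (hC r hr).1)
      hsol.continuousOn hpos
    have hy := (hC b hb).2.continuous.continuousAt.eventually (lt_mem_nhds hlt)
    obtain ⟨z', hzz', hwz', hyz'⟩ := (eventually_mem_nhdsWithin.and
      ((hw.and hy).filter_mono (nhdsWithin_le_nhds (s := Ioi z)))).exists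
    exact (hmax ⟨hαz.trans (le_of_lt hzz'), fun r hr => (hwz' r hr).le, hyz'.le⟩).not_gt hzz'
  exact ⟨w z, y z, hsol, fun r hr => ⟨hz r hr, hsol.le_of_flux_eq_zero
    (fun r hr => (hβ0 r hr).le) hGnonneg hfpos (hK _ _ hsol hz) hya hyb r hr⟩, hza.symm ▸ hαz,
      hya, hyb⟩

end Shooting

section Limit

variable {β f G : ℝ → ℝ} {Gs : ℕ → ℝ → ℝ} {a b α A B C D K : ℝ}

namespace IsFluxSolution

theorem abs_flux_le_and_norm_fluxField_le {w y : ℝ → ℝ} (h : IsFluxSolution β f G a b w y)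
    (hβ : ∀ r ∈ Icc a b, |β r| ≤ B) (hf : ∀ r ∈ Icc a b, |f r| ≤ A) (hA : 0 ≤ A) (hD : 0 ≤ D)
    (hG : ∀ r ∈ Icc a b, |G (w r)| ≤ D) (hy : y a = 0) :
    ∀ r ∈ Icc a b, |y r| ≤ A * D * (b - a) ∧
      ‖fluxField β f G r (w r, y r)‖ ≤ max (B * (A * D * (b - a))) (A * D) := by
  have hfG : ∀ r ∈ Icc a b, |f r * G (w r)| ≤ A * D := fun r hr => by
    rw [abs_mul]
    exact mul_le_mul (hf r hr) (hG r hr) (abs_nonneg _) hA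
  intro r hr
  have hflux : |y r| ≤ A * D * (b - a) :=
    (h.abs_flux_le (fun s hs => hfG s (Ico_subset_Icc_self hs)) hy r hr).trans
      (by gcongr; exact hr.2)
  refine ⟨hflux, norm_prod_le_iff.2 ⟨le_max_of_le_left ?_, le_max_of_le_right ?_⟩⟩
  · rw [fluxField, norm_mul]
    exact mul_le_mul (hβ r hr) hflux (norm_nonneg _) ((abs_nonneg _).trans (hβ r hr))
  · exact (norm_neg _).trans_le (hfG r hr)

theorem of_tendsto {w y : ℝ → ℝ} {ws ys : ℕ → ℝ → ℝ} (hβ : ContinuousOn β (Icc a b))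
    (hf : ContinuousOn f (Icc a b)) (hG : Continuous G) (hGs : ∀ n, Continuous (Gs n))
    (h : ∀ n, IsFluxSolution β f (Gs n) a b (ws n) (ys n))
    (hC : ∀ n, ∀ r ∈ Icc a b, ‖fluxField β f (Gs n) r (ws n r, ys n r)‖ ≤ C)
    (hwc : ContinuousOn w (Icc a b)) (hyc : ContinuousOn y (Icc a b))
    (hw : ∀ r ∈ Icc a b, Tendsto (ws · r) atTop (𝓝 (w r)))
    (hy : ∀ r ∈ Icc a b, Tendsto (ys · r) atTop (𝓝 (y r)))
    (hGw : ∀ r ∈ Icc a b, Tendsto (fun n => Gs n (ws n r)) atTop (𝓝 (G (w r)))) :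
    IsFluxSolution β f G a b w y :=
  isFluxSolution_iff_isIntegralCurveOn.2 <| isIntegralCurveOn_Icc_of_tendsto
    (fun n => isFluxSolution_iff_isIntegralCurveOn.1 (h n))
    (fun n => (hβ.mul (h n).continuousOn_flux).prodMk
      (hf.mul ((hGs n).comp_continuousOn (h n).continuousOn)).neg)
    hC (fun r hr => (hw r hr).prodMk_nhds (hy r hr))
    (fun r hr => ((hy r hr).const_mul _).prodMk_nhds ((hGw r hr).const_mul _).neg)
    ((hβ.mul hyc).prodMk (hf.mul (hG.comp_continuousOn hwc)).neg)

end IsFluxSolution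

theorem exists_neumann_of_tendstoUniformlyOn {w y : ℕ → ℝ → ℝ} (hab : a ≤ b)
    (hβ : ContinuousOn β (Icc a b)) (hf : ContinuousOn f (Icc a b)) (hG : Continuous G)
    (hGs : ∀ n, Continuous (Gs n)) (hlim : TendstoUniformlyOn Gs G atTop (Icc 0 K))
    (hD : ∀ n, ∀ s ∈ Icc 0 K, |Gs n s| ≤ D) (h : ∀ n, IsFluxSolution β f (Gs n) a b (w n) (y n))
    (hw : ∀ n, ∀ r ∈ Icc a b, w n r ∈ Icc 0 K) (hα : ∀ n, α ≤ w n a) (ha : ∀ n, y n a = 0)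
    (hb : ∀ n, y n b = 0) :
    ∃ w y, IsFluxSolution β f G a b w y ∧ (∀ r ∈ Icc a b, w r ∈ Icc 0 K) ∧ α ≤ w a ∧
      y a = 0 ∧ y b = 0 := by
  have hleft : a ∈ Icc a b := left_mem_Icc.2 hab
  obtain ⟨B, hB⟩ := isCompact_Icc.exists_bound_of_continuousOn hβ
  obtain ⟨A, hA⟩ := isCompact_Icc.exists_bound_of_continuousOn hf
  have hA0 : 0 ≤ A := (norm_nonneg _).trans (hA a hleft)
  have hD0 : 0 ≤ D := (abs_nonneg _).trans (hD 0 _ (hw 0 a hleft))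
  have hbound (n : ℕ) := (h n).abs_flux_le_and_norm_fluxField_le hB hA hA0 hD0
    (fun r hr => hD n _ (hw n r hr)) (ha n)
  obtain ⟨φ, hφ, γ, hγc, hγ⟩ := exists_subseq_tendsto_of_lipschitzOnWith isCompact_Icc
    (isCompact_Icc.prod isCompact_Icc)
    (fun n => (convex_Icc a b).lipschitzOnWith_of_nnnorm_hasDerivWithin_le
      (isFluxSolution_iff_isIntegralCurveOn.1 (h n))
      fun r hr => NNReal.le_toNNReal_of_coe_le (hbound n r hr).2)
    fun n r hr => mk_mem_prod (hw n r hr) (abs_le.1 (hbound n r hr).1)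
  have hγw : ∀ r ∈ Icc a b, Tendsto (fun n => w (φ n) r) atTop (𝓝 (γ r).1) := fun r hr =>
    (continuous_fst.tendsto _).comp (hγ r hr)
  have hγy : ∀ r ∈ Icc a b, Tendsto (fun n => y (φ n) r) atTop (𝓝 (γ r).2) := fun r hr =>
    (continuous_snd.tendsto _).comp (hγ r hr)
  have hγK : ∀ r ∈ Icc a b, (γ r).1 ∈ Icc 0 K := fun r hr =>
    isClosed_Icc.mem_of_tendsto (hγw r hr) (.of_forall fun n => hw (φ n) r hr)
  have hlimφ : TendstoUniformlyOn (fun n => Gs (φ n)) G atTop (Icc 0 K) := fun u hu =>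
    hφ.tendsto_atTop.eventually (hlim u hu)
  have hGw : ∀ r ∈ Icc a b, Tendsto (fun n => Gs (φ n) (w (φ n) r)) atTop (𝓝 (G (γ r).1)) :=
    fun r hr => hlimφ.tendsto_comp hG.continuousWithinAt (tendsto_nhdsWithin_iff.2
      ⟨hγw r hr, .of_forall fun n => hw (φ n) r hr⟩)
  refine ⟨fun r => (γ r).1, fun r => (γ r).2, .of_tendsto hβ hf hG (fun n => hGs (φ n))
    (fun n => h (φ n)) (fun n r hr => (hbound (φ n) r hr).2) (continuous_fst.comp_continuousOn hγc)
    (continuous_snd.comp_continuousOn hγc) hγw hγy hGw, hγK,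
    ge_of_tendsto' (hγw a hleft) fun n => hα (φ n), ?_, ?_⟩
  · exact tendsto_nhds_unique (hγy a hleft) (by simp [ha])
  · exact tendsto_nhds_unique (hγy b (right_mem_Icc.2 hab)) (by simp [hb])

end Limit

section ExistenceUnderBound

variable {β f G : ℝ → ℝ} {a b K M : ℝ}

theorem exists_abs_le_mul_abs_of_tendsto_div (hG : ContinuousOn G (Icc 0 K)) (hG0 : G 0 = 0)
    (hlim : Tendsto (fun s => G s / s) (𝓝[>] 0) (𝓝 0)) :
    ∃ C, ∀ s ∈ Icc 0 K, |G s| ≤ C * |s| := by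
  have hcont : ContinuousOn (fun s => G s / s) (Icc 0 K) := fun s hs => by
    rcases hs.1.eq_or_lt with rfl | hs0
    · exact (continuousWithinAt_Ioi_iff_Ici.1 (by simpa [ContinuousWithinAt] using hlim)).mono
        Icc_subset_Ici_self
    · exact (hG s hs).div continuousWithinAt_id hs0.ne'
  obtain ⟨C, hC⟩ := isCompact_Icc.exists_bound_of_continuousOn hcont
  refine ⟨C, fun s hs => ?_⟩
  rcases eq_or_ne s 0 with rfl | hs0
  · simp [hG0]
  · simpa [abs_div, div_le_iff₀ (abs_pos.2 hs0)] using hC s hs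

theorem exists_pos_neumann_of_bound {l : ℝ≥0} (hβ : ContinuousOn β (Icc a b))
    (hβ0 : ∀ r ∈ Icc a b, 0 < β r) (hf : ContinuousOn f (Icc a b))
    (hfpos : ∃ r ∈ Icc a b, 0 < f r) (hint : ∫ r in a..b, f r < 0) (hG : Continuous G)
    (hGnonneg : ∀ s, 0 ≤ G s) (hG0 : G 0 = 0) (hGpos : ∀ s, 0 < s → 0 < G s)
    (hlim : Tendsto (fun s => G s / s) (𝓝[>] 0) (𝓝 0)) (hosc : RegOscAtZero G)
    (hGl : ∀ s, l * (s - M) ≤ G s)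
    (hK : ∀ H w y, IsFluxSolution β f H a b w y → (∀ s, 0 ≤ H s) → (∀ s, l * (s - M) ≤ H s) →
      (∀ r ∈ Icc a b, 0 ≤ w r) → ∀ r ∈ Icc a b, 0 < f r → w r ≤ K) :
    ∃ w y, IsFluxSolution β f G a b w y ∧ (∀ r ∈ Icc a b, 0 < w r) ∧ y a = 0 ∧ y b = 0 := by
  have hab : a ≤ b := let ⟨_, hr, _⟩ := hfpos; hr.1.trans hr.2
  obtain ⟨α, hα, ε, hε, hstart⟩ := hosc.exists_pos_and_flux_pos hGpos hlim hab hβ hf hint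
  obtain ⟨Gs, hlip, hle, hge, hunif, hclose⟩ := exists_seq_lipschitzWith_le
    ⟨0, forall_mem_range.2 hGnonneg⟩ hG l hε (isCompact_Icc (a := 0) (b := 2 * α))
  choose L hL using hlip
  have hnonneg (n) (s) : 0 ≤ Gs n s := hge n _ (LipschitzWith.const' 0) hGnonneg s
  have hgrowth (n) (s) : l * (s - M) ≤ Gs n s :=
    hge n (fun s => l * (s - M)) (.of_dist_le_mul fun s t => by
      rw [Real.dist_eq, ← mul_sub, sub_sub_sub_cancel_right, abs_mul, NNReal.abs_eq,
        Real.dist_eq]) hGl s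
  have hzero (n) : Gs n 0 = 0 := ((hle n 0).trans_eq hG0).antisymm (hnonneg n 0)
  choose w y hsol hwK hαw ha hb using fun n =>
    exists_neumann_of_lipschitzWith hβ hβ0 hf hfpos (hL n) (hzero n) (hnonneg n) hα
      (fun w y h hwa hya => (hstart _ w y (hL n).continuous (hclose n) h hwa hya).imp
        (fun hw r hr => (hw r hr).le) le_of_lt)
      (fun w y h => hK _ w y h (hnonneg n) (hgrowth n))
  obtain ⟨D, hD⟩ := (isCompact_Icc (a := 0) (b := K)).exists_bound_of_continuousOn hG.continuousOn
  obtain ⟨w, y, h, hw, hwa, hya, hyb⟩ := exists_neumann_of_tendstoUniformlyOn hab hβ hf hG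
    (fun n => (hL n).continuous) (hunif _ isCompact_Icc)
    (fun n s hs => (abs_le_abs_of_nonneg (hnonneg n s) (hle n s)).trans (hD s hs)) hsol hwK hαw
    ha hb
  obtain ⟨C, hC⟩ := exists_abs_le_mul_abs_of_tendsto_div (K := K) hG.continuousOn hG0 hlim
  exact ⟨w, y, h, h.pos_of_nonneg hβ hβ0 hf (fun r hr => hC _ (hw r hr))
    (fun r hr => (hw r hr).1) (hα.trans_le hwa) hyb.ge, hya, hyb⟩

end ExistenceUnderBound

section NonlinearityOnHalfLine

variable {g : ℝ → ℝ}

theorem RegOscAtZero.congr {g' : ℝ → ℝ} (hg : RegOscAtZero g) (h : EqOn g g' (Ioi 0)) :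
    RegOscAtZero g' := by
  intro ε hε
  obtain ⟨δ, hδ, η, hη, hosc⟩ := hg ε hε
  refine ⟨δ, hδ, min η 1, lt_min hη one_pos, fun s ω hs hsδ hω => ?_⟩
  have hω0 : 0 < ω := by linarith [neg_lt_of_abs_lt (hω.trans_le (min_le_right _ _))]
  rw [← h (mul_pos hω0 hs), ← h hs]
  exact hosc s ω hs hsδ (hω.trans_le (min_le_left _ _))

theorem exists_mul_sub_le_of_growthLiminf_pos (hg : ∀ s, 0 ≤ s → 0 ≤ g s)
    (h : 0 < GrowthLiminf g) :
    ∃ l : ℝ≥0, 0 < l ∧ ∃ M : ℝ, 0 ≤ M ∧ ∀ s, 0 ≤ s → l * (s - M) ≤ g s := by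
  obtain ⟨l, hl, hlg⟩ := EReal.lt_iff_exists_real_btwn.1 h
  obtain ⟨M, hM⟩ := eventually_atTop.1 (eventually_lt_of_lt_liminf hlg)
  have hl0 : 0 < l := EReal.coe_pos.1 hl
  refine ⟨⟨l, hl0.le⟩, hl0, max M 0, le_max_right _ _, fun s hs => ?_⟩
  rcases le_or_gt s (max M 0) with hsM | hsM
  · exact (mul_nonpos_of_nonneg_of_nonpos hl0.le (sub_nonpos.2 hsM)).trans (hg s hs)
  · have hs0 : 0 < s := (le_max_right _ _).trans_lt hsM
    have hls : l * s < g s :=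
      (lt_div_iff₀ hs0).1 (EReal.coe_lt_coe_iff.1 (hM s ((le_max_left _ _).trans hsM.le)))
    exact (mul_le_mul_of_nonneg_left (sub_le_self s (le_max_right _ _)) hl0.le).trans hls.le

theorem IsFluxSolution.congr_nonlinearity {β f g' w y : ℝ → ℝ} {a b : ℝ}
    (h : IsFluxSolution β f g a b w y) (hg : ∀ r ∈ Icc a b, g (w r) = g' (w r)) :
    IsFluxSolution β f g' a b w y where
  hasDerivWithinAt := h.hasDerivWithinAt
  hasDerivWithinAt_flux r hr := by rw [← hg r hr]; exact h.hasDerivWithinAt_flux r hr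

theorem CondQ1.eventually_exists_pos_neumann {β f : ℝ → ℝ} {a b : ℝ} (hq : CondQ1 a b f)
    (hab : a < b) (hβ : ContinuousOn β (Icc a b)) (hβ0 : ∀ r ∈ Icc a b, 0 < β r)
    (hf : ContinuousOn f (Icc a b)) (hint : ∫ r in a..b, f r < 0) (hg : CondG1 g)
    (hosc : RegOscAtZero g) (hlim : Tendsto (fun s => g s / s) (𝓝[>] 0) (𝓝 0))
    (hgrowth : 0 < GrowthLiminf g) :
    ∀ᶠ ν in atTop, ∃ w y, IsFluxSolution β (fun r => ν * f r) g a b w y ∧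
      (∀ r ∈ Icc a b, 0 < w r) ∧ y a = 0 ∧ y b = 0 := by
  obtain ⟨hgc, hg_nonneg, hg_zero, hg_pos⟩ := hg
  obtain ⟨l, hl, M, hM, hgl⟩ := exists_mul_sub_le_of_growthLiminf_pos hg_nonneg hgrowth
  set G : ℝ → ℝ := fun s => g (max s 0)
  have hext : EqOn g G (Ioi 0) := fun s hs => congrArg g (max_eq_left (le_of_lt hs)).symm
  have hGc : Continuous G := hgc.comp_continuous (by fun_prop) fun s => le_max_right s 0
  have hGlim : Tendsto (fun s => G s / s) (𝓝[>] 0) (𝓝 0) := hlim.congr' <| by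
    filter_upwards [self_mem_nhdsWithin] with s hs
    rw [hext hs]
  have hGl : ∀ s, l * (s - M) ≤ G s := fun s =>
    (by gcongr; exact le_max_left s 0 : l * (s - M) ≤ l * (max s 0 - M)).trans
      (hgl _ (le_max_right s 0))
  obtain ⟨m, hm, hmβ⟩ := isCompact_Icc.exists_forall_le' hβ hβ0
  obtain ⟨B, hB⟩ := isCompact_Icc.exists_bound_of_continuousOn hβ
  obtain ⟨K, hK⟩ := hq.exists_eventually_le hab hf hm
    (fun r hr => ⟨hmβ r hr, le_of_abs_le (hB r hr)⟩) hl hM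
  filter_upwards [hK, eventually_gt_atTop 0] with ν hν hν0
  obtain ⟨r, hr, hfr⟩ := hq.exists_pos
  have hνint : ∫ r in a..b, ν * f r < 0 := by
    rw [intervalIntegral.integral_const_mul]
    exact mul_neg_of_pos_of_neg hν0 hint
  obtain ⟨w, y, h, hw, hya, hyb⟩ := exists_pos_neumann_of_bound hβ hβ0 (hf.const_mul ν)
    ⟨r, hr, mul_pos hν0 hfr⟩ hνint hGc (fun s => hg_nonneg _ (le_max_right s 0))
    (by simpa [G] using hg_zero) (fun s hs => hg_pos _ (lt_max_of_lt_left hs)) hGlim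
    (hosc.congr hext) hGl fun H w y h hH hHl hw r hr hfr =>
      hν H w y h hH hHl hw r hr (pos_of_mul_pos_right hfr hν0.le)
  exact ⟨w, y, h.congr_nonlinearity fun r hr => (hext (hw r hr)).symm, hw, hya, hyb⟩

end NonlinearityOnHalfLine

section RadialEquation

theorem hasDerivAt_inv_pow {r : ℝ} (n : ℕ) (hr : r ≠ 0) :
    HasDerivAt (fun r => (r ^ n)⁻¹) (-(n / r) * (r ^ n)⁻¹) r := by
  refine ((hasDerivAt_pow n r).fun_inv (pow_ne_zero n hr)).congr_deriv ?_
  rcases n with _ | n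
  · simp
  · simp only [Nat.add_sub_cancel]
    field_simp
    ring

theorem IsFluxSolution.radialNeumannPosSol {N : ℕ} {R₁ R₂ : ℝ} {Q g w y : ℝ → ℝ} (hN : 1 ≤ N)
    (hR₁ : 0 < R₁) (hQ : ContinuousOn Q (Icc R₁ R₂)) (hg : ContinuousOn g (Ici 0))
    (h : IsFluxSolution (fun r => (r ^ (N - 1))⁻¹) (fun r => r ^ (N - 1) * Q r) g R₁ R₂ w y)
    (hw : ∀ r ∈ Icc R₁ R₂, 0 < w r) (hy₁ : y R₁ = 0) (hy₂ : y R₂ = 0) :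
    RadialNeumannPosSol N R₁ R₂ Q g := by
  have hr0 : ∀ r ∈ Icc R₁ R₂, r ≠ 0 := fun r hr => (hR₁.trans_le hr.1).ne'
  have hderiv : ∀ r ∈ Icc R₁ R₂, HasDerivWithinAt (fun r => (r ^ (N - 1))⁻¹ * y r)
      (-((N - 1) / r * ((r ^ (N - 1))⁻¹ * y r) + Q r * g (w r))) (Icc R₁ R₂) r := fun r hr => by
    refine ((hasDerivAt_inv_pow (N - 1) (hr0 r hr)).hasDerivWithinAt.fun_mul
      (h.hasDerivWithinAt_flux r hr)).congr_deriv ?_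
    have := hr0 r hr
    rw [Nat.cast_pred hN]
    field_simp
    ring
  refine ⟨w, _, _, h.hasDerivWithinAt, hderiv, ?_, hw, fun r _ => by ring, by simp [hy₁],
    by simp [hy₂]⟩
  exact (((continuousOn_const.div continuousOn_id hr0).mul fun r hr =>
    (hderiv r hr).continuousWithinAt).add (hQ.mul (hg.comp h.continuousOn fun r hr =>
      (hw r hr).le))).neg

end RadialEquation

/-- Theorem: for `N ≥ 2`, `0 < R₁ < R₂`, a continuous radial weight `Q`
satisfying (q1) and (q2), and `g` satisfying (g1), regularly oscillating at
zero, with `g(s)/s → 0` as `s → 0⁺` and `liminf_{s→+∞} g(s)/s > 0`, the Neumann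
problem `−Δu = ν Q(‖x‖) g(u)` on the annulus has a positive radially symmetric
solution for every sufficiently large `ν`. -/
theorem statement_12
    (N : ℕ) (hN : 2 ≤ N) (R₁ R₂ : ℝ) (hR1 : 0 < R₁) (hR12 : R₁ < R₂)
    (Q : ℝ → ℝ) (hQc : ContinuousOn Q (Icc R₁ R₂))
    (hq1 : CondQ1 R₁ R₂ Q)
    (hq2 : (∫ r in R₁..R₂, r ^ (N - 1) * Q r) < 0)
    (g : ℝ → ℝ) (hg1 : CondG1 g) (hreg : RegOscAtZero g)
    (hg0 : Tendsto (fun s => g s / s) (nhdsWithin 0 (Ioi 0)) (nhds 0))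
    (hginf : (0 : EReal) < GrowthLiminf g) :
    ∃ νs : ℝ, 0 < νs ∧ ∀ ν : ℝ, νs < ν →
      RadialNeumannPosSol N R₁ R₂ (fun r => ν * Q r) g := by
  have hpow : ∀ r ∈ Icc R₁ R₂, 0 < r ^ (N - 1) := fun r hr => pow_pos (hR1.trans_le hr.1) _
  have hpow_inv : ContinuousOn (fun r : ℝ => (r ^ (N - 1))⁻¹) (Icc R₁ R₂) :=
    (continuous_pow _).continuousOn.inv₀ fun r hr => (hpow r hr).ne'
  have hex := (hq1.mul hpow).eventually_exists_pos_neumann hR12 hpow_inv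
    (fun r hr => inv_pos.2 (hpow r hr)) ((continuous_pow _).continuousOn.mul hQc) hq2 hg1 hreg hg0
    hginf
  obtain ⟨νs, hνs⟩ := eventually_atTop.1 hex
  refine ⟨max νs 1, lt_max_of_lt_right one_pos, fun ν hν => ?_⟩
  obtain ⟨w, y, h, hw, hy₁, hy₂⟩ := hνs ν ((le_max_left _ _).trans hν.le)
  simp only [mul_left_comm ν] at h
  exact h.radialNeumannPosSol (one_le_two.trans hN) hR1 (hQc.const_mul ν) hg1.1 hw hy₁ hy₂
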